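/- The inclusion problem for non-erasing pattern languages (without constraints) is undecidable: for every finite alphabet Σ with |Σ| ≥ 2 there is no algorithm that, given two patterns α and β over Σ ∪ ℕ, decides whether L_NE(α) ⊆ L_NE(β). Formally, the predicate 'L_NE(α) ⊆ L_NE(β)' on pairs of patterns (finite words over Σ ∪ ℕ) is not a computable predicate. -/

import Mathlib

/-- Patterns over `Σ ∪ X` with variable set `X = ℕ`. -/
abbrev Pattern (σ : Type) := List (σ ⊕ ℕ)

/-- Applying a substitution (determined by its action on variables, and fixing every
terminal) to a pattern; this is the restriction of the induced monoid morphism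
`(Σ ∪ X)* → Σ*`. -/
def applySub {σ : Type} (s : ℕ → List σ) : Pattern σ → List σ
  | [] => []
  | c :: p => Sum.elim (fun a => [a]) s c ++ applySub s p

/-- The set of variables occurring in a pattern. -/
def varsOf {σ : Type} (p : Pattern σ) : Set ℕ := {x | Sum.inr x ∈ p}

/-- The non-erasing pattern language `L_NE(p)` of a plain pattern. -/
def LangNE {σ : Type} (p : Pattern σ) : Set (List σ) :=
  {w | ∃ s : ℕ → List σ, (∀ x ∈ varsOf p, s x ≠ []) ∧ applySub s p = w}

/-!
The halting problem is encoded in the iteration of a map `f` on `ℕ` that is affine on residue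
classes: a program becomes a register machine, and the contents of its registers become exponents of
prime numbers.

The left pattern codes an orbit of `f` from `N` to `E` in unary notation. One variable stands
for the intermediate values, a second one for the yardstick, which is meant to be a power
`a ^ T` longer than the orbit. An error is a forbidden letter, a yardstick that is a factor of the
coded orbit, or a pair of consecutive values `n`, `m` with `m ≠ f n`. Since `f` is affine on
residue classes, each error has one of finitely many forms, and each form is a pair of patterns
with common variables that is matched with the coded orbit and the yardstick: in `m ≠ f n` the
unknown numbers are coded by variables that also occur in the second pattern, so that they are
mapped to powers of `a`. The right pattern matches if any one of these pairs does. Hence the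
inclusion says that every orbit from `N` to `E` contains an error, i.e. that the iteration
of `f` on `N` does not lead to `E`.
-/

namespace PatternInclusion

section Substitution

variable {σ : Type}

/-- The pattern consisting of the terminals of a word. -/
def lit (w : List σ) : Pattern σ := w.map Sum.inl

/-- Renaming the variables of a pattern. -/
def rename (f : ℕ → ℕ) (p : Pattern σ) : Pattern σ := p.map (Sum.map id f)

variable (s : ℕ → List σ)

@[simp]
theorem applySub_nil : applySub s [] = [] := rfl

@[simp]
theorem applySub_terminal_cons (a : σ) (p : Pattern σ) :
    applySub s (Sum.inl a :: p) = a :: applySub s p := rfl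

@[simp]
theorem applySub_variable_cons (x : ℕ) (p : Pattern σ) :
    applySub s (Sum.inr x :: p) = s x ++ applySub s p := rfl

@[simp]
theorem applySub_append (p q : Pattern σ) : applySub s (p ++ q) = applySub s p ++ applySub s q := by
  induction p with
  | nil => rfl
  | cons c p ih => cases c <;> simp [ih]

@[simp]
theorem applySub_lit (w : List σ) : applySub s (lit w) = w := by
  induction w with
  | nil => rfl
  | cons a w ih => rw [lit, List.map_cons, applySub_terminal_cons, ← lit, ih]

@[simp]
theorem applySub_rename (f : ℕ → ℕ) (p : Pattern σ) :
    applySub s (rename f p) = applySub (s ∘ f) p := by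
  induction p with
  | nil => rfl
  | cons c p ih => cases c <;> simpa [rename] using ih

theorem applySub_congr {s t : ℕ → List σ} {p : Pattern σ} (h : ∀ x ∈ varsOf p, s x = t x) :
    applySub s p = applySub t p := by
  induction p with
  | nil => rfl
  | cons c p ih =>
    have hp := ih fun x hx => h x (List.mem_cons_of_mem _ hx)
    cases c with
    | inl a => simp [hp]
    | inr x => simp [hp, h x List.mem_cons_self]

theorem mem_langNE_iff [Nonempty σ] {p : Pattern σ} {w : List σ} :
    w ∈ LangNE p ↔ ∃ s : ℕ → List σ, (∀ x, s x ≠ []) ∧ applySub s p = w := by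
  classical
  obtain ⟨a⟩ := ‹Nonempty σ›
  constructor
  · rintro ⟨s, hs, rfl⟩
    refine ⟨fun x => if s x = [] then [a] else s x, fun x => ?_,
      applySub_congr fun x hx => if_neg (hs x hx)⟩
    by_cases hx : s x = [] <;> simp [hx]
  · rintro ⟨s, hs, rfl⟩
    exact ⟨s, fun x _ => hs x, rfl⟩

/-- A pair of patterns that share their variables. -/
abbrev PatternPair (σ : Type) := Pattern σ × Pattern σ

/-- The words `H` and `Y` are the images of the two patterns under one non-erasing substitution. -/
def PatternPair.Matches (e : PatternPair σ) (H Y : List σ) : Prop :=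
  ∃ t : ℕ → List σ, (∀ x, t x ≠ []) ∧ applySub t e.1 = H ∧ applySub t e.2 = Y

end Substitution

section Gadget

variable {σ : Type}

/-- The words `G` and `D` between three occurrences of the marker `m`, preceded by `z`;
the letter `b` is the separator. It is used both for words and for patterns. -/
def frame {τ : Type} (b : τ) (z m G D : List τ) : List τ :=
  z ++ b :: (m ++ b :: (G ++ b :: (m ++ b :: (D ++ b :: (m ++ [b])))))

/-- Four copies of a letter, the default value of a variable. -/
def quad (a : σ) : List σ := [a, a, a, a]

/-- The frame around the pair `e` with variables as prefix and as marker. -/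
def component (b : σ) (e : PatternPair σ) : Pattern σ :=
  frame (Sum.inl b) [Sum.inr 1] [Sum.inr 0] (rename (· + 2) e.1) (rename (· + 2) e.2)

/-- The value of `component b e` when the marker is `a` and every other variable is `quad a`. -/
def dummy (a b : σ) (e : PatternPair σ) : List σ :=
  frame b (quad a) [a] (applySub (fun _ => quad a) e.1) (applySub (fun _ => quad a) e.2)

/-- The dummies of a list of pairs, one after the other. -/
def dummies (a b : σ) (l : List (PatternPair σ)) : List σ := l.flatMap (dummy a b)

/-- The first pattern is the product of the marker variables of all components, the second one is
the product of the components, with pairwise disjoint variables, followed by a further variable.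
The even variables belong to the first component and the odd ones to the remaining list. -/
def selector (b : σ) : List (PatternPair σ) → PatternPair σ
  | [] => ([], [Sum.inr 0])
  | e :: l =>
    (Sum.inr (Equiv.natSumNatEquivNat (.inl 0)) ::
        rename (Equiv.natSumNatEquivNat ∘ .inr) (selector b l).1,
      rename (Equiv.natSumNatEquivNat ∘ .inl) (component b e) ++
        rename (Equiv.natSumNatEquivNat ∘ .inr) (selector b l).2)

theorem applySub_component (s : ℕ → List σ) (b : σ) (e : PatternPair σ) :
    applySub s (component b e) =
      frame b (s 1) (s 0) (applySub (fun x => s (x + 2)) e.1)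
        (applySub (fun x => s (x + 2)) e.2) := by
  simp [component, frame, Function.comp_def]

theorem selector_nil_matches_iff {b : σ} {S C : List σ} :
    (selector b []).Matches S C ↔ S = [] ∧ C ≠ [] := by
  constructor
  · rintro ⟨t, ht, rfl, rfl⟩
    simpa [selector] using ht 0
  · rintro ⟨rfl, hC⟩
    exact ⟨fun _ => C, fun _ => hC, rfl, by simp [selector]⟩

theorem selector_cons_matches_iff {b : σ} {e : PatternPair σ} {l : List (PatternPair σ)}
    {S C : List σ} :
    (selector b (e :: l)).Matches S C ↔
      ∃ m z H Y S' C', m ≠ [] ∧ z ≠ [] ∧ e.Matches H Y ∧ (selector b l).Matches S' C' ∧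
        S = m ++ S' ∧ C = frame b z m H Y ++ C' := by
  constructor
  · rintro ⟨t, ht, rfl, rfl⟩
    set u : ℕ → List σ := t ∘ Equiv.natSumNatEquivNat ∘ .inl with hu
    refine ⟨u 0, u 1, _, _, _, _, ht _, ht _, ⟨fun x => u (x + 2), fun x => ht _, rfl, rfl⟩,
      ⟨t ∘ Equiv.natSumNatEquivNat ∘ .inr, fun x => ht _, rfl, rfl⟩, ?_, ?_⟩
    · simp [selector, hu]
    · simp [selector, applySub_component, hu]
  · rintro ⟨m, z, _, _, _, _, hm, hz, ⟨u, hu, rfl, rfl⟩, ⟨v, hv, rfl, rfl⟩, rfl, rfl⟩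
    let w : ℕ → List σ := fun x => Nat.casesOn x m fun x => Nat.casesOn x z u
    have hw : ∀ x, w x ≠ []
      | 0 => hm
      | 1 => hz
      | x + 2 => hu x
    refine ⟨Sum.elim w v ∘ Equiv.natSumNatEquivNat.symm, fun x => ?_, ?_, ?_⟩
    · rcases h : Equiv.natSumNatEquivNat.symm x with x | x <;> simp [h, hw, hv]
    · simp [selector, Function.comp_def, w]
    · simp [selector, applySub_component, Function.comp_def, w]

theorem frame_append (b : σ) (z m G D q : List σ) :
    frame b z m G D ++ q =
      z ++ b :: (m ++ b :: (G ++ b :: (m ++ b :: (D ++ b :: (m ++ b :: q))))) := by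
  simp [frame]

theorem append_frame (b : σ) (p z m G D : List σ) :
    p ++ frame b z m G D = frame b (p ++ z) m G D := by
  simp [frame]

theorem dummies_cons (a b : σ) (e : PatternPair σ) (l : List (PatternPair σ)) :
    dummies a b (e :: l) = dummy a b e ++ dummies a b l := List.flatMap_cons

theorem quad_ne_nil (a : σ) : quad a ≠ [] := List.cons_ne_nil _ _

/-- The word, or pattern, on the left of the reduction: a prefix `aaa`, `n + 1` units for the
markers of a selector of `n` pairs, the marker `aaa`, and the frame of `H` and `Y` between dummies
`D`. -/
def leftWord (a b : σ) (n : ℕ) (D H Y : List σ) : List σ :=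
  List.replicate (n + 4) a ++
    b :: ([a, a, a] ++ b :: (D ++ (frame b (quad a) [a, a] H Y ++ (D ++ quad a))))

/-- The pattern on the right of the reduction. By the number of units, just one component of the
selector gets the marker `aa` and hence a match of its pair with the framed words on the left. -/
def rightPattern (a b : σ) (l : List (PatternPair σ)) : Pattern σ :=
  lit [a, a, a] ++ ((selector b l).1 ++ (lit [b, a, a, a, b] ++ (selector b l).2))

theorem selector_matches_dummies (a b : σ) (l : List (PatternPair σ)) (X : List σ) :
    (selector b l).Matches (List.replicate l.length a) (X ++ (dummies a b l ++ quad a)) := by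
  induction l generalizing X with
  | nil => exact selector_nil_matches_iff.2 ⟨rfl, by simp [quad_ne_nil]⟩
  | cons e l ih =>
    refine selector_cons_matches_iff.2 ⟨[a], X ++ quad a, _, _, _, _, by simp,
      by simp [quad_ne_nil], ⟨_, fun _ => quad_ne_nil a, rfl, rfl⟩, ih [], rfl, ?_⟩
    simp [dummies_cons, dummy, frame]

/-- The components before the one of `e` are mapped to dummies, the prefix variable of the
component of `e` absorbs the remaining dummies of the first block, and the prefix variable that
follows absorbs the word `X`. -/
theorem selector_matches_of_mem {a b : σ} {l : List (PatternPair σ)} {e : PatternPair σ}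
    (he : e ∈ l) {H Y : List σ} (hHY : e.Matches H Y) (X : List σ) :
    (selector b l).Matches (List.replicate (l.length + 1) a)
      (dummies a b l ++ (frame b (quad a) [a, a] H Y ++ (X ++ (dummies a b l ++ quad a)))) := by
  induction l generalizing X with
  | nil => simp at he
  | cons e' l ih =>
    rcases List.mem_cons.1 he with rfl | he
    · refine selector_cons_matches_iff.2 ⟨[a, a], dummies a b (e :: l) ++ quad a, H, Y, _, _,
        by simp, by simp [quad_ne_nil], hHY,
        selector_matches_dummies a b l (X ++ dummy a b e), rfl, ?_⟩
      simp [dummies_cons, frame]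
    · refine selector_cons_matches_iff.2 ⟨[a], quad a, _, _, _, _, by simp, quad_ne_nil a,
        ⟨_, fun _ => quad_ne_nil a, rfl, rfl⟩, ih he (X ++ dummy a b e'), rfl, ?_⟩
      simp [dummies_cons, dummy, frame]

theorem length_le_of_selector_matches {b : σ} {l : List (PatternPair σ)} {S C : List σ}
    (h : (selector b l).Matches S C) : l.length ≤ S.length := by
  induction l generalizing S C with
  | nil => simp
  | cons e l ih =>
    obtain ⟨m, z, H, Y, S', C', hm, -, -, hl, rfl, -⟩ := selector_cons_matches_iff.1 h
    have := ih hl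
    have := List.length_pos_iff.2 hm
    simp only [List.length_cons, List.length_append]
    lia

theorem exists_frame_of_selector_matches {a b : σ} {l : List (PatternPair σ)} {C : List σ}
    (h : (selector b l).Matches (List.replicate (l.length + 1) a) C) :
    ∃ e ∈ l, ∃ z H Y q, e.Matches H Y ∧ C = frame b z [a, a] H Y ++ q := by
  induction l generalizing C with
  | nil => simpa using (selector_nil_matches_iff.1 h).1
  | cons e l ih =>
    obtain ⟨m, z, H, Y, S, C', hm, -, hHY, hl, hS, rfl⟩ := selector_cons_matches_iff.1 h
    have hlen := length_le_of_selector_matches hl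
    have hm := List.length_pos_iff.2 hm
    obtain ⟨hsum, hm', hS'⟩ := List.append_eq_replicate_iff.1 hS.symm
    rw [List.length_cons] at hsum
    obtain h | h : m.length = 1 ∨ m.length = 2 := by lia
    · rw [hS', show S.length = l.length + 1 by lia] at hl
      obtain ⟨e', he', z', H', Y', q, hHY', rfl⟩ := ih hl
      exact ⟨e', List.mem_cons_of_mem _ he', frame b z m H Y ++ z', H', Y', q, hHY',
        by rw [← append_frame, List.append_assoc]⟩
    · rw [h] at hm'
      subst hm'
      exact ⟨e, List.mem_cons_self, z, H, Y, C', hHY, rfl⟩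

theorem leftWord_mem_langNE_rightPattern {a b : σ} {l : List (PatternPair σ)} {e : PatternPair σ}
    (he : e ∈ l) {H Y : List σ} (hHY : e.Matches H Y) :
    leftWord a b l.length (dummies a b l) H Y ∈ LangNE (rightPattern a b l) := by
  obtain ⟨s, hs, hS, hC⟩ := selector_matches_of_mem (a := a) (b := b) he hHY []
  refine ⟨s, fun x _ => hs x, ?_⟩
  have hrep : List.replicate (l.length + 4) a = [a, a, a] ++ List.replicate (l.length + 1) a := by
    rfl
  simp [rightPattern, leftWord, hS, hC, hrep]

theorem eq_and_eq_of_append_cons_append_cons_append_cons {α : Type} {x : α}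
    {p q r t p' q' r' t' : List α}
    (h : p ++ x :: (q ++ x :: (r ++ x :: t)) = p' ++ x :: (q' ++ x :: (r' ++ x :: t')))
    (hp : x ∉ p') (hq : x ∉ q') (hr : x ∉ r') (ht : x ∉ t') : q = q' ∧ r = r' := by
  classical
  have hcount : p.count x + (q.count x + (r.count x + t.count x)) = 0 := by
    have := congrArg (List.count x) h
    simp only [List.count_append, List.count_cons_self, List.count_eq_zero_of_not_mem hp,
      List.count_eq_zero_of_not_mem hq, List.count_eq_zero_of_not_mem hr,
      List.count_eq_zero_of_not_mem ht] at this
    lia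
  simp only [Nat.add_eq_zero_iff, List.count_eq_zero] at hcount
  obtain ⟨hp₀, hq₀, hr₀, ht₀⟩ := hcount
  replace h := congrArg (List.splitOn x) h
  simp only [List.splitOn_append_cons_self, List.splitOn_eq_singleton hp,
    List.splitOn_eq_singleton hq, List.splitOn_eq_singleton hr, List.splitOn_eq_singleton ht,
    List.splitOn_eq_singleton hp₀, List.splitOn_eq_singleton hq₀, List.splitOn_eq_singleton hr₀,
    List.splitOn_eq_singleton ht₀, List.singleton_append, List.cons.injEq] at h
  exact ⟨h.2.1, h.2.2.1⟩

variable [DecidableEq σ]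

theorem splitOn_injective (b : σ) : Function.Injective (List.splitOn b) :=
  Function.LeftInverse.injective (g := [b].intercalate) fun _ => List.intercalate_splitOn b

/-- No block of `w` between consecutive separators `b` is one of the two markers `aa`, `aaa`. -/
def Unmarked (a b : σ) (w : List σ) : Prop :=
  [a, a] ∉ w.splitOn b ∧ [a, a, a] ∉ w.splitOn b

variable {a b : σ}

theorem unmarked_append_cons_iff {v w : List σ} :
    Unmarked a b (v ++ b :: w) ↔ Unmarked a b v ∧ Unmarked a b w := by
  simp only [Unmarked, List.splitOn_append_cons_self, List.mem_append, not_or]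
  tauto

theorem splitOn_replicate (hab : a ≠ b) (n : ℕ) :
    (List.replicate n a).splitOn b = [List.replicate n a] :=
  List.splitOn_eq_singleton fun h => hab (List.eq_of_mem_replicate h).symm

theorem unmarked_replicate (hab : a ≠ b) {n : ℕ} (h2 : n ≠ 2) (h3 : n ≠ 3) :
    Unmarked a b (List.replicate n a) := by
  rw [Unmarked, splitOn_replicate hab, List.mem_singleton, List.mem_singleton]
  exact ⟨fun h => h2 (by simpa using congrArg List.length h.symm),
    fun h => h3 (by simpa using congrArg List.length h.symm)⟩

theorem unmarked_quad (hab : a ≠ b) : Unmarked a b (quad a) :=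
  unmarked_replicate hab (n := 4) (by decide) (by decide)

/-- Both patterns of `e` are mapped to words without markers when every variable is `quad a`. -/
def PatternPair.DefaultUnmarked (a b : σ) (e : PatternPair σ) : Prop :=
  Unmarked a b (applySub (fun _ => quad a) e.1) ∧ Unmarked a b (applySub (fun _ => quad a) e.2)

theorem unmarked_dummies_append (hab : a ≠ b) {l : List (PatternPair σ)} {w : List σ}
    (hl : ∀ e ∈ l, e.DefaultUnmarked a b) (hw : Unmarked a b w) :
    Unmarked a b (dummies a b l ++ w) := by
  have hmarker : Unmarked a b [a] := unmarked_replicate hab (n := 1) (by decide) (by decide)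
  induction l with
  | nil => exact hw
  | cons e l ih =>
    rw [dummies_cons, dummy, List.append_assoc, frame_append]
    simp only [unmarked_append_cons_iff, hmarker, unmarked_quad hab, true_and]
    exact ⟨(hl e List.mem_cons_self).1, (hl e List.mem_cons_self).2,
      ih fun e' he' => hl e' (List.mem_cons_of_mem _ he')⟩

/-- The slots of a frame with marker `aa` can be read off any word in which `aa` occurs just three
times as a block. -/
theorem slots_eq_of_frame_append_eq (hab : a ≠ b) {z G D q z' H Y q' : List σ}
    (h : frame b z [a, a] G D ++ q = frame b z' [a, a] H Y ++ q')
    (hz : Unmarked a b z') (hH : Unmarked a b H) (hY : Unmarked a b Y) (hq : Unmarked a b q') :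
    G = H ∧ D = Y := by
  have haa : [a, a].splitOn b = [[a, a]] := splitOn_replicate hab 2
  rw [frame_append, frame_append] at h
  have hsplit := congrArg (List.splitOn b) h
  simp only [List.splitOn_append_cons_self, haa, List.singleton_append] at hsplit
  obtain ⟨hG, hD⟩ :=
    eq_and_eq_of_append_cons_append_cons_append_cons hsplit hz.1 hH.1 hY.1 hq.1
  exact ⟨splitOn_injective b hG, splitOn_injective b hD⟩

/-- The block `aaa` of `leftWord` fixes the image of the terminal factor `baaab`. -/
theorem exists_matches_of_leftWord_mem (hab : a ≠ b) {l : List (PatternPair σ)}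
    (hl : ∀ e ∈ l, e.DefaultUnmarked a b) {H Y : List σ} (hH : Unmarked a b H)
    (hY : Unmarked a b Y)
    (h : leftWord a b l.length (dummies a b l) H Y ∈ LangNE (rightPattern a b l)) :
    ∃ e ∈ l, e.Matches H Y := by
  have : Nonempty σ := ⟨a⟩
  obtain ⟨s, hs, h⟩ := mem_langNE_iff.1 h
  have hquad := unmarked_quad hab
  have hdums := unmarked_dummies_append hab hl hquad
  have haa : [a, a].splitOn b = [[a, a]] := splitOn_replicate hab 2
  have haaa : [a, a, a].splitOn b = [[a, a, a]] := splitOn_replicate hab 3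
  have hW : [a, a, a] ∉ (dummies a b l ++ (frame b (quad a) [a, a] H Y ++
      (dummies a b l ++ quad a))).splitOn b := by
    rw [frame_append, ← List.append_assoc]
    simp only [List.splitOn_append_cons_self, haa]
    simp [hdums.2, hH.2, hY.2]
  have hunits : [a, a, a] ∉ [List.replicate (l.length + 4) a] := by simp [List.replicate_succ]
  have hsplit : leftWord a b l.length (dummies a b l) H Y =
      ([a, a, a] ++ applySub s (selector b l).1) ++ b :: ([a, a, a] ++
        b :: applySub s (selector b l).2) := by
    rw [← h]
    simp [rightPattern]
  replace hsplit := congrArg (List.splitOn b) hsplit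
  simp only [leftWord, List.splitOn_append_cons_self, splitOn_replicate hab, haaa,
    List.singleton_append] at hsplit
  obtain ⟨hS, -, hC⟩ := (List.append_cons_inj_of_notMem hunits hW).1 hsplit
  rw [← splitOn_replicate hab] at hS
  have hS := List.append_cancel_left (as := [a, a, a]) (splitOn_injective b hS)
  obtain ⟨e, he, z, G, D, q, hGD, hC'⟩ := exists_frame_of_selector_matches
    ⟨s, hs, hS.symm, (splitOn_injective b hC).symm⟩
  rw [← List.append_assoc, append_frame] at hC'
  obtain ⟨rfl, rfl⟩ := slots_eq_of_frame_append_eq hab hC'.symm hdums hH hY hdums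
  exact ⟨e, he, hGD⟩

end Gadget

section History

variable {σ : Type}

/-- The word `a ^ n₀ b a ^ n₁ b ⋯ b a ^ nₖ` for the list `[n₀, …, nₖ]`. -/
def unaryBlocks (a b : σ) (L : List ℕ) : List σ :=
  [b].intercalate (L.map fun n => List.replicate n a)

theorem unaryBlocks_singleton (a b : σ) (n : ℕ) : unaryBlocks a b [n] = List.replicate n a :=
  List.intercalate_singleton

theorem unaryBlocks_cons (a b : σ) (n : ℕ) {L : List ℕ} (hL : L ≠ []) :
    unaryBlocks a b (n :: L) = List.replicate n a ++ b :: unaryBlocks a b L := by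
  simp [unaryBlocks, List.intercalate_cons_of_ne_nil, hL]

theorem unaryBlocks_append (a b : σ) {L L' : List ℕ} (hL : L ≠ []) (hL' : L' ≠ []) :
    unaryBlocks a b (L ++ L') = unaryBlocks a b L ++ b :: unaryBlocks a b L' := by
  induction L with
  | nil => exact absurd rfl hL
  | cons n L ih =>
    rcases eq_or_ne L [] with rfl | hne
    · simp [unaryBlocks_singleton, unaryBlocks_cons, hL']
    · simp [unaryBlocks_cons, hne, ih hne]

theorem unaryBlocks_ne_nil (a b : σ) {n : ℕ} {L : List ℕ} (hn : 0 < n) (h : n ∈ L) :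
    unaryBlocks a b L ≠ [] := by
  obtain ⟨m, L, rfl⟩ := List.exists_cons_of_ne_nil (List.ne_nil_of_mem h)
  rcases eq_or_ne L [] with rfl | hL
  · obtain rfl := List.mem_singleton.1 h
    simpa [unaryBlocks_singleton] using hn.ne'
  · simp [unaryBlocks_cons, hL]

theorem eq_or_eq_of_mem_unaryBlocks {a b c : σ} {L : List ℕ} (h : c ∈ unaryBlocks a b L) :
    c = a ∨ c = b := by
  induction L with
  | nil => simp [unaryBlocks] at h
  | cons n L ih =>
    rcases eq_or_ne L [] with rfl | hL
    · rw [unaryBlocks_singleton] at h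
      exact .inl (List.eq_of_mem_replicate h)
    · rw [unaryBlocks_cons a b n hL, List.mem_append, List.mem_cons] at h
      rcases h with h | rfl | h
      exacts [.inl (List.eq_of_mem_replicate h), .inr rfl, ih h]

/-- The history with initial value `N`, final value `E` and the intermediate values coded by `x`.
The outer blocks make sure that something precedes `N` and follows `E`. -/
def historyWord {τ : Type} (a b : τ) (N E : ℕ) (x : List τ) : List τ :=
  quad a ++ b :: (List.replicate N a ++ b :: (x ++ b :: (List.replicate E a ++ b :: quad a)))

theorem historyWord_unaryBlocks (a b : σ) (N E : ℕ) {L : List ℕ} (hL : L ≠ []) :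
    historyWord a b N E (unaryBlocks a b L) =
      unaryBlocks a b (4 :: (N :: (L ++ [E]) ++ [4])) := by
  simp [historyWord, unaryBlocks_cons, unaryBlocks_append, unaryBlocks_singleton, hL, quad,
    List.replicate_succ]

theorem exists_eq_unaryBlocks {a b : σ} {w : List σ}
    (hw : ∀ c ∈ w, c = a ∨ c = b) : ∃ L ≠ [], w = unaryBlocks a b L := by
  induction w with
  | nil => exact ⟨[0], by simp, by simp [unaryBlocks_singleton]⟩
  | cons c w ih =>
    obtain ⟨L, hL, rfl⟩ := ih fun d hd => hw d (List.mem_cons_of_mem _ hd)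
    obtain ⟨n, L, rfl⟩ := List.exists_cons_of_ne_nil hL
    rcases eq_or_ne c b with rfl | hcb
    · exact ⟨0 :: n :: L, by simp, by simp [unaryBlocks_cons]⟩
    · obtain rfl : c = a := (hw c List.mem_cons_self).resolve_right hcb
      refine ⟨(n + 1) :: L, by simp, ?_⟩
      rcases eq_or_ne L [] with rfl | hL
      · simp [unaryBlocks_singleton, List.replicate_succ]
      · simp [unaryBlocks_cons, hL, List.replicate_succ]

theorem splitOn_unaryBlocks [DecidableEq σ] {a b : σ} (hab : a ≠ b) {L : List ℕ} (hL : L ≠ []) :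
    (unaryBlocks a b L).splitOn b = L.map fun n => List.replicate n a := by
  refine List.splitOn_intercalate b ?_ (by simpa using hL)
  simp only [List.mem_map, forall_exists_index, and_imp, forall_apply_eq_imp_iff₂]
  exact fun n _ h => hab (List.eq_of_mem_replicate h).symm

theorem unmarked_unaryBlocks [DecidableEq σ] {a b : σ} (hab : a ≠ b) {L : List ℕ} (hL : L ≠ [])
    (h2 : 2 ∉ L) (h3 : 3 ∉ L) : Unmarked a b (unaryBlocks a b L) := by
  have hinj : Function.Injective fun n : ℕ => List.replicate n a :=
    List.replicate_left_injective a
  rw [Unmarked, splitOn_unaryBlocks hab hL]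
  exact ⟨fun h => h2 ((List.mem_map_of_injective hinj (a := 2)).1 h),
    fun h => h3 ((List.mem_map_of_injective hinj (a := 3)).1 h)⟩

theorem unmarked_historyWord [DecidableEq σ] {a b : σ} (hab : a ≠ b) {N E : ℕ} {L : List ℕ}
    (hL : L ≠ []) (h4 : ∀ n ∈ N :: (L ++ [E]), 4 ≤ n) :
    Unmarked a b (historyWord a b N E (unaryBlocks a b L)) := by
  have hmem : ∀ n ∈ 4 :: (N :: (L ++ [E]) ++ [4]), 4 ≤ n := by
    simpa [or_imp, forall_and] using h4
  rw [historyWord_unaryBlocks a b N E hL]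
  exact unmarked_unaryBlocks hab (by simp) (fun h => absurd (hmem 2 h) (by decide))
    fun h => absurd (hmem 3 h) (by decide)

/-- The outer blocks prevent that the factorisation uses the ends of the word. -/
theorem exists_eq_append_of_unaryBlocks_eq {a b : σ} (hab : a ≠ b) {k k' n m : ℕ} {L : List ℕ}
    {X Z : List σ}
    (h : unaryBlocks a b (k :: (L ++ [k'])) =
      X ++ b :: (List.replicate n a ++ b :: (List.replicate m a ++ b :: Z))) :
    ∃ P Q, L = P ++ n :: m :: Q := by
  classical
  replace h := congrArg (List.splitOn b) h
  simp only [List.splitOn_append_cons_self, splitOn_replicate hab,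
    splitOn_unaryBlocks hab (List.cons_ne_nil _ _), List.singleton_append] at h
  obtain ⟨P, R, hPR, hP, hR⟩ := List.map_eq_append_iff.1 h
  obtain ⟨n', R, rfl, hn, hR⟩ := List.map_eq_cons_iff.1 hR
  obtain ⟨m', Q, rfl, hm, hQ⟩ := List.map_eq_cons_iff.1 hR
  obtain rfl := List.replicate_left_injective a hn
  obtain rfl := List.replicate_left_injective a hm
  have hP : P ≠ [] := fun h => List.splitOn_ne_nil b X (by rw [← hP, h, List.map_nil])
  have hQ : Q ≠ [] := fun h => List.splitOn_ne_nil b Z (by rw [← hQ, h, List.map_nil])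
  obtain ⟨p, P, rfl⟩ := List.exists_cons_of_ne_nil hP
  obtain ⟨Q, q, rfl⟩ := (List.eq_nil_or_concat' Q).resolve_left hQ
  refine ⟨P, Q, List.append_inj_left' (t₁ := [k']) (t₂ := [q]) ?_ rfl⟩
  simpa using (List.cons.inj hPR).2

/-- The form `leftCoeff * u + rightCoeff * v + const` in two unknowns `u` and `v`. -/
structure AffineForm where
  leftCoeff : ℕ
  rightCoeff : ℕ
  const : ℕ

namespace AffineForm

/-- The value of the form at `u` and `v`. -/
def eval (F : AffineForm) (u v : ℕ) : ℕ := F.leftCoeff * u + F.rightCoeff * v + F.const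

/-- The form in unary notation: the variables `2` and `3` stand for `a ^ u` and `a ^ v`. -/
def toPattern (a : σ) (F : AffineForm) : Pattern σ :=
  List.replicate F.leftCoeff (Sum.inr 2) ++ (List.replicate F.rightCoeff (Sum.inr 3) ++
    List.replicate F.const (Sum.inl a))

end AffineForm

@[simp]
theorem applySub_replicate_variable (s : ℕ → List σ) (n x : ℕ) :
    applySub s (List.replicate n (Sum.inr x)) = (List.replicate n (s x)).flatten := by
  induction n with
  | zero => rfl
  | succ n ih => simp [List.replicate_succ, ih]

@[simp]
theorem applySub_replicate_terminal (s : ℕ → List σ) (n : ℕ) (a : σ) :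
    applySub s (List.replicate n (Sum.inl a)) = List.replicate n a := by
  rw [← List.map_replicate, ← lit, applySub_lit]

theorem AffineForm.applySub_toPattern {s : ℕ → List σ} {a : σ} {u v : ℕ}
    (hu : s 2 = List.replicate u a) (hv : s 3 = List.replicate v a) (F : AffineForm) :
    applySub s (F.toPattern a) = List.replicate (F.eval u v) a := by
  simp [toPattern, eval, hu, hv, Nat.add_assoc]

/-- The relation `{(F u v, G u v) | u, v > 0}` for two affine forms `F` and `G`. -/
abbrev AffineRelation := AffineForm × AffineForm

/-- The pair `(n, m)` belongs to one of the relations. -/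
def Violates (Rs : List AffineRelation) (n m : ℕ) : Prop :=
  ∃ R ∈ Rs, ∃ u v, 0 < u ∧ 0 < v ∧ R.1.eval u v = n ∧ R.2.eval u v = m

/-- Matches if the second word is a factor of the first one that is not a prefix or suffix. -/
def tooShortPair : PatternPair σ := ([Sum.inr 0, Sum.inr 2, Sum.inr 1], [Sum.inr 2])

/-- Matches if the first word contains the letter `c`. -/
def historyLetterPair (c : σ) : PatternPair σ := ([Sum.inr 0, Sum.inl c, Sum.inr 1], [Sum.inr 2])

/-- Matches if the second word contains the letter `c`. -/
def yardstickLetterPair (c : σ) : PatternPair σ := ([Sum.inr 0], [Sum.inr 2, Sum.inl c, Sum.inr 3])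

/-- Matches if the first word contains consecutive blocks that satisfy the relation `R` and the
second word is a sufficiently large power of `a`, where the variables `2` and `3` that occur in the
affine forms are restricted to powers of `a` by the second pattern. -/
def relationPair (a b : σ) (R : AffineRelation) : PatternPair σ :=
  (Sum.inr 0 :: Sum.inl b :: (R.1.toPattern a ++
    Sum.inl b :: (R.2.toPattern a ++ [Sum.inl b, Sum.inr 1])), [Sum.inr 2, Sum.inr 3, Sum.inr 4])

theorem tooShortPair_matches_iff {H Y : List σ} :
    tooShortPair.Matches H Y ↔ Y ≠ [] ∧ ∃ X Z, X ≠ [] ∧ Z ≠ [] ∧ H = X ++ (Y ++ Z) := by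
  constructor
  · rintro ⟨t, ht, rfl, rfl⟩
    simpa [tooShortPair, ht] using ⟨t 0, ht 0, t 1, ht 1, rfl⟩
  · rintro ⟨hY, X, Z, hX, hZ, rfl⟩
    refine ⟨fun | 0 => X | 1 => Z | _ + 2 => Y, ?_, by simp [tooShortPair], by simp [tooShortPair]⟩
    rintro (_ | _ | _) <;> assumption

theorem historyLetterPair_matches_iff {c : σ} {H Y : List σ} :
    (historyLetterPair c).Matches H Y ↔
      Y ≠ [] ∧ ∃ X Z, X ≠ [] ∧ Z ≠ [] ∧ H = X ++ c :: Z := by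
  constructor
  · rintro ⟨t, ht, rfl, rfl⟩
    simpa [historyLetterPair, ht] using ⟨t 0, ht 0, t 1, ht 1, rfl⟩
  · rintro ⟨hY, X, Z, hX, hZ, rfl⟩
    refine ⟨fun | 0 => X | 1 => Z | _ + 2 => Y, ?_, by simp [historyLetterPair],
      by simp [historyLetterPair]⟩
    rintro (_ | _ | _) <;> assumption

theorem yardstickLetterPair_matches_iff {c : σ} {H Y : List σ} :
    (yardstickLetterPair c).Matches H Y ↔
      H ≠ [] ∧ ∃ X Z, X ≠ [] ∧ Z ≠ [] ∧ Y = X ++ c :: Z := by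
  constructor
  · rintro ⟨t, ht, rfl, rfl⟩
    simpa [yardstickLetterPair, ht] using ⟨t 2, ht 2, t 3, ht 3, rfl⟩
  · rintro ⟨hH, X, Z, hX, hZ, rfl⟩
    refine ⟨fun | 2 => X | 3 => Z | _ => H, fun x => ?_, by simp [yardstickLetterPair],
      by simp [yardstickLetterPair]⟩
    dsimp only
    split <;> assumption

theorem relationPair_matches_replicate_iff {a b : σ} {R : AffineRelation} {H : List σ} {T : ℕ} :
    (relationPair a b R).Matches H (List.replicate T a) ↔
      ∃ u v X Z, 0 < u ∧ 0 < v ∧ u + v < T ∧ X ≠ [] ∧ Z ≠ [] ∧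
        H = X ++ b :: (List.replicate (R.1.eval u v) a ++
          b :: (List.replicate (R.2.eval u v) a ++ b :: Z)) := by
  constructor
  · rintro ⟨t, ht, rfl, hT⟩
    have hpos x : 0 < (t x).length := List.length_pos_iff.2 (ht x)
    simp only [relationPair, applySub_variable_cons, applySub_nil, List.append_nil,
      List.append_eq_replicate_iff] at hT
    obtain ⟨hlen, hu, -, hv, -⟩ := hT
    rw [List.length_append] at hlen
    refine ⟨(t 2).length, (t 3).length, t 0, t 1, hpos 2, hpos 3, ?_, ht 0, ht 1, ?_⟩
    · have := hpos 4
      lia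
    · simp [relationPair, AffineForm.applySub_toPattern hu hv]
  · rintro ⟨u, v, X, Z, hu, hv, hT, hX, hZ, rfl⟩
    have hne {n : ℕ} (hn : 0 < n) : List.replicate n a ≠ [] := by simpa using hn.ne'
    let t : ℕ → List σ
      | 0 => X
      | 1 => Z
      | 2 => List.replicate u a
      | 3 => List.replicate v a
      | _ + 4 => List.replicate (T - (u + v)) a
    refine ⟨t, ?_, ?_, ?_⟩
    · rintro (_ | _ | _ | _ | _)
      exacts [hX, hZ, hne hu, hne hv, hne (by lia)]
    · simp [relationPair, AffineForm.applySub_toPattern (s := t) (a := a) (u := u) (v := v), t]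
    · simp [relationPair, t]
      lia

theorem tooShortPair_matches_of_le {a : σ} {n T : ℕ} {X Z : List σ} (hT : 0 < T) (hn : T ≤ n)
    (hX : X ≠ []) (hZ : Z ≠ []) :
    tooShortPair.Matches (X ++ (List.replicate n a ++ Z)) (List.replicate T a) := by
  obtain ⟨k, rfl⟩ := Nat.exists_eq_add_of_le hn
  exact tooShortPair_matches_iff.2 ⟨by simpa using hT.ne', X, List.replicate k a ++ Z, hX,
    by simp [hZ], by rw [List.replicate_add, List.append_assoc]⟩

variable [DecidableEq σ] {a b : σ}

theorem unmarked_quad_append_cons_quad (hab : a ≠ b) (c : σ) :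
    Unmarked a b (quad a ++ c :: quad a) := by
  rcases eq_or_ne c b with rfl | hcb
  · exact unmarked_append_cons_iff.2 ⟨unmarked_quad hab, unmarked_quad hab⟩
  · have hb : b ∉ quad a ++ c :: quad a := by simp [quad, hab.symm, hcb.symm]
    rw [Unmarked, List.splitOn_eq_singleton hb]
    simp [quad]

theorem defaultUnmarked_relationPair (hab : a ≠ b) {R : AffineRelation}
    (h₁ : R.1.eval 4 4 ≠ 2 ∧ R.1.eval 4 4 ≠ 3) (h₂ : R.2.eval 4 4 ≠ 2 ∧ R.2.eval 4 4 ≠ 3) :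
    (relationPair a b R).DefaultUnmarked a b := by
  have hform (F : AffineForm) : applySub (fun _ => quad a) (F.toPattern a) =
      List.replicate (F.eval 4 4) a :=
    F.applySub_toPattern (s := fun _ => quad a) (u := 4) (v := 4) rfl rfl
  have hrep {n : ℕ} (hn : n ≠ 2 ∧ n ≠ 3) : Unmarked a b (List.replicate n a) :=
    unmarked_replicate hab hn.1 hn.2
  constructor
  · simp only [relationPair, applySub_variable_cons, applySub_terminal_cons, applySub_append,
      hform, applySub_nil, List.append_nil]
    simp only [unmarked_append_cons_iff, unmarked_quad hab, hrep h₁, hrep h₂, and_self]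
  · exact hrep (n := 12) (by decide)

variable [Fintype σ]

/-- The pairs one of which matches a history and a word `Y` if `Y` is not a large power of `a` or
the history is ill-formed or contains consecutive values that satisfy one of the relations. -/
noncomputable def errorPairs (a b : σ) (Rs : List AffineRelation) : List (PatternPair σ) :=
  tooShortPair :: ((({a, b}ᶜ : Finset σ).toList.map historyLetterPair ++
    ({a}ᶜ : Finset σ).toList.map yardstickLetterPair) ++ Rs.map (relationPair a b))

theorem mem_errorPairs_iff {Rs : List AffineRelation} {e : PatternPair σ} :
    e ∈ errorPairs a b Rs ↔ e = tooShortPair ∨ (∃ c, c ≠ a ∧ c ≠ b ∧ historyLetterPair c = e) ∨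
      (∃ c, c ≠ a ∧ yardstickLetterPair c = e) ∨ ∃ R ∈ Rs, relationPair a b R = e := by
  simp [errorPairs, and_assoc]

/-- The conditions on a list of relations under which `errorPairs` detects exactly the violations:
a yardstick that is too short for `u` and `v` is a factor of one of the related blocks, and the
default words of the relations contain no markers. -/
structure Admissible (Rs : List AffineRelation) : Prop where
  add_le_max : ∀ R ∈ Rs, ∀ u v, u + v ≤ max (R.1.eval u v) (R.2.eval u v)
  eval_fst_ne : ∀ R ∈ Rs, R.1.eval 4 4 ≠ 2 ∧ R.1.eval 4 4 ≠ 3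
  eval_snd_ne : ∀ R ∈ Rs, R.2.eval 4 4 ≠ 2 ∧ R.2.eval 4 4 ≠ 3

variable {Rs : List AffineRelation}

theorem defaultUnmarked_of_mem_errorPairs (hab : a ≠ b) (hRs : Admissible Rs) {e : PatternPair σ}
    (he : e ∈ errorPairs a b Rs) : e.DefaultUnmarked a b := by
  have hquad := unmarked_quad hab
  rcases mem_errorPairs_iff.1 he with
    rfl | ⟨c, -, -, rfl⟩ | ⟨c, -, rfl⟩ | ⟨R, hR, rfl⟩
  · exact ⟨unmarked_replicate hab (n := 12) (by decide) (by decide), hquad⟩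
  · exact ⟨unmarked_quad_append_cons_quad hab c, hquad⟩
  · exact ⟨hquad, unmarked_quad_append_cons_quad hab c⟩
  · exact defaultUnmarked_relationPair hab (hRs.eval_fst_ne R hR) (hRs.eval_snd_ne R hR)

theorem exists_errorPair_matches_of_violates (hRs : Admissible Rs) {n m T : ℕ} {X Z : List σ}
    (hX : X ≠ []) (hZ : Z ≠ []) (hT : 0 < T) (h : Violates Rs n m) :
    ∃ e ∈ errorPairs a b Rs, e.Matches
      (X ++ b :: (List.replicate n a ++ b :: (List.replicate m a ++ b :: Z)))
      (List.replicate T a) := by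
  obtain ⟨R, hR, u, v, hu, hv, rfl, rfl⟩ := h
  rcases lt_or_ge (u + v) T with huv | huv
  · exact ⟨_, mem_errorPairs_iff.2 (.inr (.inr (.inr ⟨R, hR, rfl⟩))),
      relationPair_matches_replicate_iff.2 ⟨u, v, X, Z, hu, hv, huv, hX, hZ, rfl⟩⟩
  refine ⟨_, mem_errorPairs_iff.2 (.inl rfl), ?_⟩
  rcases le_max_iff.1 (huv.trans (hRs.add_le_max R hR u v)) with hle | hle
  · simpa using tooShortPair_matches_of_le (a := a) hT hle (X := X ++ [b])
      (Z := b :: (List.replicate (R.2.eval u v) a ++ b :: Z)) (by simp) (by simp)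
  · simpa using tooShortPair_matches_of_le (a := a) hT hle
      (X := X ++ b :: (List.replicate (R.1.eval u v) a ++ [b])) (Z := b :: Z) (by simp) (by simp)

/-- No chain from `N` to `E` with at least one intermediate value avoids the relations. -/
def Separates (Rs : List AffineRelation) (N E : ℕ) : Prop :=
  ∀ L : List ℕ, L ≠ [] → ¬ List.IsChain (fun n m => ¬ Violates Rs n m) (N :: (L ++ [E]))

theorem exists_errorPair_matches_unaryBlocks (hRs : Admissible Rs) {N E T : ℕ}
    (hsep : Separates Rs N E) {L : List ℕ} (hL : L ≠ []) (hT : 0 < T) :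
    ∃ e ∈ errorPairs a b Rs,
      e.Matches (historyWord a b N E (unaryBlocks a b L)) (List.replicate T a) := by
  have hchain := hsep L hL
  rw [List.isChain_iff_forall_rel_of_append_cons_cons] at hchain
  push Not at hchain
  obtain ⟨n, m, P, Q, hPQ, hviol⟩ := hchain
  have hhist : historyWord a b N E (unaryBlocks a b L) = unaryBlocks a b (4 :: P) ++ b ::
      (List.replicate n a ++ b :: (List.replicate m a ++ b :: unaryBlocks a b (Q ++ [4]))) := by
    rw [historyWord_unaryBlocks a b N E hL, hPQ]
    simp [← unaryBlocks_cons, ← unaryBlocks_append]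
  rw [hhist]
  exact exists_errorPair_matches_of_violates hRs
    (unaryBlocks_ne_nil a b (n := 4) (by decide) (by simp))
    (unaryBlocks_ne_nil a b (n := 4) (by decide) (by simp)) hT hviol

theorem exists_errorPair_matches (hRs : Admissible Rs) {N E : ℕ} (hsep : Separates Rs N E)
    (x : List σ) {y : List σ} (hy : y ≠ []) :
    ∃ e ∈ errorPairs a b Rs, e.Matches (historyWord a b N E x) (a :: (y ++ [a])) := by
  by_cases hya : ∀ c ∈ y, c = a
  · by_cases hxab : ∀ c ∈ x, c = a ∨ c = b
    · obtain ⟨L, hL, rfl⟩ := exists_eq_unaryBlocks hxab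
      have hrep : a :: (y ++ [a]) = List.replicate (y.length + 2) a := by
        simpa [List.eq_replicate_iff, or_imp, forall_and] using hya
      rw [hrep]
      exact exists_errorPair_matches_unaryBlocks hRs hsep hL (Nat.succ_pos _)
    · push Not at hxab
      obtain ⟨c, hcx, hca, hcb⟩ := hxab
      obtain ⟨X, Z, rfl⟩ := List.append_of_mem hcx
      exact ⟨_, mem_errorPairs_iff.2 (.inr (.inl ⟨c, hca, hcb, rfl⟩)),
        historyLetterPair_matches_iff.2 ⟨by simp,
          quad a ++ b :: (List.replicate N a ++ b :: X),
          Z ++ b :: (List.replicate E a ++ b :: quad a), by simp, by simp, by simp [historyWord]⟩⟩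
  · push Not at hya
    obtain ⟨c, hcy, hca⟩ := hya
    obtain ⟨X, Z, rfl⟩ := List.append_of_mem hcy
    exact ⟨_, mem_errorPairs_iff.2 (.inr (.inr (.inl ⟨c, hca, rfl⟩))),
      yardstickLetterPair_matches_iff.2
        ⟨by simp [historyWord], a :: X, Z ++ [a], by simp, by simp, by simp⟩⟩

/-- A yardstick as long as the history is longer than all of its blocks. -/
theorem not_errorPair_matches (hab : a ≠ b) {N E : ℕ} {L : List ℕ} (hL : L ≠ [])
    (hchain : List.IsChain (fun n m => ¬ Violates Rs n m) (N :: (L ++ [E]))) {T : ℕ}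
    (hT : (historyWord a b N E (unaryBlocks a b L)).length ≤ T) {e : PatternPair σ}
    (he : e ∈ errorPairs a b Rs) :
    ¬ e.Matches (historyWord a b N E (unaryBlocks a b L)) (List.replicate T a) := by
  intro hmatch
  rcases mem_errorPairs_iff.1 he with
    rfl | ⟨c, hca, hcb, rfl⟩ | ⟨c, hca, rfl⟩ | ⟨R, hR, rfl⟩
  · obtain ⟨-, X, Z, hX, -, hH⟩ := tooShortPair_matches_iff.1 hmatch
    have hX := List.length_pos_iff.2 hX
    rw [hH] at hT
    simp only [List.length_append, List.length_replicate] at hT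
    lia
  · obtain ⟨-, X, Z, -, -, hH⟩ := historyLetterPair_matches_iff.1 hmatch
    rw [historyWord_unaryBlocks a b N E hL] at hH
    have hc : c ∈ unaryBlocks a b (4 :: (N :: (L ++ [E]) ++ [4])) := by
      rw [hH]
      simp
    exact (eq_or_eq_of_mem_unaryBlocks hc).elim hca hcb
  · obtain ⟨-, X, Z, -, -, hY⟩ := yardstickLetterPair_matches_iff.1 hmatch
    exact hca (List.eq_of_mem_replicate (n := T) (by simp [hY]))
  · obtain ⟨u, v, X, Z, hu, hv, -, -, -, hH⟩ := relationPair_matches_replicate_iff.1 hmatch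
    rw [historyWord_unaryBlocks a b N E hL] at hH
    obtain ⟨P, Q, hPQ⟩ := exists_eq_append_of_unaryBlocks_eq hab hH
    exact List.isChain_iff_forall_rel_of_append_cons_cons.1 hchain hPQ
      ⟨R, hR, u, v, hu, hv, rfl, rfl⟩

/-- The history with an unknown interior, and an unknown yardstick. -/
noncomputable def leftPattern (a b : σ) (Rs : List AffineRelation) (N E : ℕ) : Pattern σ :=
  leftWord (Sum.inl a) (Sum.inl b) (errorPairs a b Rs).length
    (lit (dummies a b (errorPairs a b Rs)))
    (historyWord (Sum.inl a) (Sum.inl b) N E [Sum.inr 0])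
    [Sum.inl a, Sum.inr 1, Sum.inl a]

theorem applySub_leftPattern (s : ℕ → List σ) (a b : σ) (Rs : List AffineRelation) (N E : ℕ) :
    applySub s (leftPattern a b Rs N E) =
      leftWord a b (errorPairs a b Rs).length (dummies a b (errorPairs a b Rs))
        (historyWord a b N E (s 0)) (a :: (s 1 ++ [a])) := by
  simp [leftPattern, leftWord, historyWord, frame, quad]

theorem langNE_leftPattern_subset (hRs : Admissible Rs) {N E : ℕ} (hsep : Separates Rs N E) :
    LangNE (leftPattern a b Rs N E) ⊆ LangNE (rightPattern a b (errorPairs a b Rs)) := by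
  have : Nonempty σ := ⟨a⟩
  intro w hw
  obtain ⟨s, hs, rfl⟩ := mem_langNE_iff.1 hw
  obtain ⟨e, he, hmatch⟩ := exists_errorPair_matches (a := a) (b := b) hRs hsep (s 0) (hs 1)
  rw [applySub_leftPattern]
  exact leftWord_mem_langNE_rightPattern he hmatch

theorem not_langNE_leftPattern_subset (hab : a ≠ b) (hRs : Admissible Rs) {N E : ℕ} {L : List ℕ}
    (hL : L ≠ []) (hchain : List.IsChain (fun n m => ¬ Violates Rs n m) (N :: (L ++ [E])))
    (h4 : ∀ n ∈ N :: (L ++ [E]), 4 ≤ n) :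
    ¬ LangNE (leftPattern a b Rs N E) ⊆ LangNE (rightPattern a b (errorPairs a b Rs)) := by
  have : Nonempty σ := ⟨a⟩
  intro hsub
  set T := (historyWord a b N E (unaryBlocks a b L)).length with hT
  have hT1 : 1 < T := by
    simp only [hT, historyWord, quad, List.length_append, List.length_cons]
    lia
  have hx : unaryBlocks a b L ≠ [] := by
    obtain ⟨n, hn⟩ := List.exists_mem_of_ne_nil L hL
    exact unaryBlocks_ne_nil a b (by have := h4 n (by simp [hn]); lia) hn
  let s : ℕ → List σ
    | 0 => unaryBlocks a b L
    | _ + 1 => List.replicate T a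
  have hs : ∀ x, s x ≠ []
    | 0 => hx
    | _ + 1 => by simpa [s] using (zero_lt_one.trans hT1).ne'
  have hY : a :: (List.replicate T a ++ [a]) = List.replicate (T + 2) a := by
    simp [List.eq_replicate_iff, or_imp]
  have hmem := hsub (mem_langNE_iff.2 ⟨s, hs, applySub_leftPattern s a b Rs N E⟩)
  obtain ⟨e, he, hmatch⟩ := exists_matches_of_leftWord_mem hab
    (fun e he => defaultUnmarked_of_mem_errorPairs hab hRs he)
    (unmarked_historyWord hab hL h4)
    (by rw [hY]; exact unmarked_replicate hab (by lia) (by lia)) hmem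
  rw [hY] at hmatch
  exact not_errorPair_matches hab hL hchain (by lia) he hmatch

end History

/-- A map that is affine on each residue class of some modulus, as in generalisations of the Collatz
problem. The slope is the factor of the quotient `q` in `n = modulus * q + r`. -/
structure CollatzMap where
  toFun : ℕ → ℕ
  modulus : ℕ
  slope : ℕ → ℕ
  modulus_pos : 0 < modulus
  slope_pos : ∀ r, 0 < slope r
  toFun_mul_add : ∀ q, ∀ r < modulus, toFun (modulus * q + r) = slope r * q + toFun r

namespace CollatzMap

instance : CoeFun CollatzMap fun _ => ℕ → ℕ := ⟨toFun⟩

variable (f : CollatzMap)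

theorem apply_mul_add (q : ℕ) {r : ℕ} (hr : r < f.modulus) :
    f (f.modulus * q + r) = f.slope r * q + f r := f.toFun_mul_add q r hr

theorem apply_eq (n : ℕ) :
    f n = f.slope (n % f.modulus) * (n / f.modulus) + f (n % f.modulus) := by
  rw [← f.apply_mul_add _ (Nat.mod_lt n f.modulus_pos), Nat.div_add_mod]

/-- From here on the values of the map are described by `CollatzMap.relations`. -/
def threshold : ℕ :=
  2 * f.modulus * ∑ r ∈ Finset.range f.modulus, (f.slope r + f r) + 4

/-- Relations whose union consists, above the threshold, of all `(n, m)` with `m ≠ f n`. The first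
two contain the pairs for which `m` is much smaller than `n`; for each residue class there are one
relation for `f n < m` and `slope r` relations for the remaining `m < f n`. -/
def relations : List AffineRelation :=
  (⟨2 * f.modulus, 1, 0⟩, ⟨1, 0, 0⟩) :: (⟨1, 1, 0⟩, ⟨0, 0, 0⟩) ::
    ((List.range f.modulus).map (fun r => (⟨f.modulus, 0, r⟩, ⟨f.slope r, 1, f r⟩)) ++
      (List.range f.modulus).flatMap fun r => (List.range (f.slope r)).map fun j =>
        (⟨f.modulus, f.modulus, r⟩, ⟨f.slope r, 0, f r + j⟩))

theorem mem_relations_iff {R : AffineRelation} :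
    R ∈ f.relations ↔ R = (⟨2 * f.modulus, 1, 0⟩, ⟨1, 0, 0⟩) ∨ R = (⟨1, 1, 0⟩, ⟨0, 0, 0⟩) ∨
      (∃ r < f.modulus, (⟨f.modulus, 0, r⟩, ⟨f.slope r, 1, f r⟩) = R) ∨
      ∃ r < f.modulus, ∃ j < f.slope r,
        (⟨f.modulus, f.modulus, r⟩, ⟨f.slope r, 0, f r + j⟩) = R := by
  simp [relations]

theorem admissible_relations : Admissible f.relations := by
  have hmod := f.modulus_pos
  constructor
  · intro R hR u v
    rcases f.mem_relations_iff.1 hR with rfl | rfl | ⟨r, -, rfl⟩ | ⟨r, -, j, -, rfl⟩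
    · refine le_max_of_le_left ?_
      have : u ≤ f.modulus * u := Nat.le_mul_of_pos_left u hmod
      simp only [AffineForm.eval]
      lia
    · simp [AffineForm.eval]
    · refine le_max_of_le_right ?_
      have : u ≤ f.slope r * u := Nat.le_mul_of_pos_left u (f.slope_pos r)
      simp only [AffineForm.eval]
      lia
    · refine le_max_of_le_left ?_
      have hu : u ≤ f.modulus * u := Nat.le_mul_of_pos_left u hmod
      have hv : v ≤ f.modulus * v := Nat.le_mul_of_pos_left v hmod
      simp only [AffineForm.eval]
      lia
  · intro R hR
    rcases f.mem_relations_iff.1 hR with rfl | rfl | ⟨r, -, rfl⟩ | ⟨r, -, j, -, rfl⟩ <;>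
      simp only [AffineForm.eval] <;> lia
  · intro R hR
    rcases f.mem_relations_iff.1 hR with rfl | rfl | ⟨r, -, rfl⟩ | ⟨r, -, j, -, rfl⟩
    · simp [AffineForm.eval]
    · simp [AffineForm.eval]
    all_goals
      have := f.slope_pos r
      simp only [AffineForm.eval]
      lia

theorem apply_ne_of_violates {n m : ℕ} (hn : f.modulus ≤ n) (h : Violates f.relations n m) :
    m ≠ f n := by
  have hmod := f.modulus_pos
  obtain ⟨R, hR, u, v, hu, hv, hn', rfl⟩ := h
  have hle : n / f.modulus ≤ f n := by
    rw [f.apply_eq]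
    exact (Nat.le_mul_of_pos_left _ (f.slope_pos _)).trans (Nat.le_add_right _ _)
  rcases f.mem_relations_iff.1 hR with rfl | rfl | ⟨r, hr, rfl⟩ | ⟨r, hr, j, hj, rfl⟩ <;>
    simp only [AffineForm.eval] at hn' ⊢
  · intro heq
    have : 0 < n / f.modulus := Nat.div_pos hn hmod
    have hlt : n < f.modulus * (n / f.modulus + 1) := Nat.lt_mul_div_succ n hmod
    have : f.modulus * (n / f.modulus) ≤ f.modulus * u := Nat.mul_le_mul_left _ (by lia)
    have : f.modulus ≤ f.modulus * u := Nat.le_mul_of_pos_right _ hu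
    lia
  · have : 0 < n / f.modulus := Nat.div_pos hn hmod
    lia
  · obtain rfl : n = f.modulus * u + r := by lia
    rw [apply_mul_add f u hr]
    lia
  · obtain rfl : n = f.modulus * (u + v) + r := by lia
    rw [apply_mul_add f _ hr]
    have : f.slope r ≤ f.slope r * v := Nat.le_mul_of_pos_right _ hv
    lia

theorem mul_lt_of_threshold_le {n r m : ℕ} (hn : f.threshold ≤ n) (hr : r < f.modulus)
    (hm : m ≤ f.slope r + f r) : 2 * f.modulus * m < n := by
  have hsum : f.slope r + f r ≤ ∑ r ∈ Finset.range f.modulus, (f.slope r + f r) :=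
    Finset.single_le_sum (f := fun r => f.slope r + f r) (fun _ _ => Nat.zero_le _)
      (Finset.mem_range.2 hr)
  have := Nat.mul_le_mul_left (2 * f.modulus) (hm.trans hsum)
  rw [threshold] at hn
  lia

theorem modulus_le_of_threshold_le {n : ℕ} (hn : f.threshold ≤ n) : f.modulus ≤ n := by
  have := f.mul_lt_of_threshold_le hn f.modulus_pos (m := 1)
    (le_add_right (f.slope_pos 0))
  lia

theorem violates_of_ne_apply {n m : ℕ} (hn : f.threshold ≤ n) (h : m ≠ f n) :
    Violates f.relations n m := by
  have hr : n % f.modulus < f.modulus := Nat.mod_lt n f.modulus_pos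
  have hq : 0 < n / f.modulus := Nat.div_pos (f.modulus_le_of_threshold_le hn) f.modulus_pos
  have hdecomp := Nat.div_add_mod n f.modulus
  rw [f.apply_eq] at h
  set q := n / f.modulus
  set r := n % f.modulus
  rcases lt_or_ge m (f.slope r + f r) with hsmall | hlarge
  · have hmn : 2 * f.modulus * m < n := f.mul_lt_of_threshold_le hn hr hsmall.le
    have hn4 : 4 ≤ n := (Nat.le_add_left 4 _).trans hn
    rcases Nat.eq_zero_or_pos m with rfl | hm
    · refine ⟨_, f.mem_relations_iff.2 (.inr (.inl rfl)), 1, n - 1, one_pos, by lia, ?_, ?_⟩ <;>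
        simp only [AffineForm.eval] <;> lia
    · refine ⟨_, f.mem_relations_iff.2 (.inl rfl), m, n - 2 * f.modulus * m, hm, by lia, ?_, ?_⟩ <;>
        simp only [AffineForm.eval] <;> lia
  rcases lt_or_gt_of_ne h with hlt | hgt
  · have hlt' : m - f r < q * f.slope r := by lia
    have hdiv := Nat.div_add_mod (m - f r) (f.slope r)
    have hu : 0 < (m - f r) / f.slope r := Nat.div_pos (by lia) (f.slope_pos r)
    have hv : (m - f r) / f.slope r < q := Nat.div_lt_of_lt_mul (by lia)
    refine ⟨_, f.mem_relations_iff.2 (.inr (.inr (.inr ⟨r, hr, (m - f r) % f.slope r,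
      Nat.mod_lt _ (f.slope_pos r), rfl⟩))), (m - f r) / f.slope r,
      q - (m - f r) / f.slope r, hu, by lia, ?_, ?_⟩ <;> simp only [AffineForm.eval]
    · rw [← Nat.mul_add, Nat.add_sub_cancel' hv.le, hdecomp]
    · lia
  · refine ⟨_, f.mem_relations_iff.2 (.inr (.inr (.inl ⟨r, hr, rfl⟩))), q,
      m - (f.slope r * q + f r), hq, by lia, ?_, ?_⟩ <;>
      simp only [AffineForm.eval] <;> lia

variable {f} {N : ℕ}

theorem eq_iterate_of_isChain (hN : ∀ t, f.threshold ≤ f^[t] N) {L : List ℕ} {E : ℕ}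
    (h : List.IsChain (fun n m => ¬ Violates f.relations n m) (N :: (L ++ [E]))) :
    E = f^[L.length + 1] N := by
  induction L generalizing N with
  | nil =>
    exact not_not.1 (mt (f.violates_of_ne_apply (hN 0)) h.rel)
  | cons n L ih =>
    obtain ⟨hn, hL⟩ := List.isChain_cons_cons.1 h
    obtain rfl : n = f N := not_not.1 (mt (f.violates_of_ne_apply (hN 0)) hn)
    exact ih (fun t => hN (t + 1)) hL

theorem isChain_iterate (hN : ∀ t, f.threshold ≤ f^[t] N) (t : ℕ) :
    List.IsChain (fun n m => ¬ Violates f.relations n m) (List.iterate f N t) := by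
  refine List.isChain_iff_getElem.2 fun i hi => ?_
  rw [List.getElem_iterate, List.getElem_iterate, Function.iterate_succ_apply']
  exact fun h => f.apply_ne_of_violates (f.modulus_le_of_threshold_le (hN i)) h rfl

variable {σ : Type} [Fintype σ] [DecidableEq σ] {a b : σ}

theorem langNE_leftPattern_subset_iff (hab : a ≠ b) (hN : ∀ t, f.threshold ≤ f^[t] N) (E : ℕ) :
    LangNE (leftPattern a b f.relations N E) ⊆
      LangNE (rightPattern a b (errorPairs a b f.relations)) ↔ ∀ t, f^[t + 2] N ≠ E := by
  constructor
  · rintro hsub t rfl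
    have horbit : N :: (List.iterate f (f N) (t + 1) ++ [f^[t + 2] N]) =
        List.iterate f N (t + 3) :=
      congrArg (N :: ·) (List.iterate_add f (f N) (t + 1) 1).symm
    have hchain := isChain_iterate hN (t + 3)
    have h4 : ∀ n ∈ List.iterate f N (t + 3), 4 ≤ n := by
      intro n hn
      obtain ⟨i, -, rfl⟩ := List.mem_iterate.1 hn
      exact (Nat.le_add_left 4 _).trans (hN i)
    rw [← horbit] at hchain h4
    exact not_langNE_leftPattern_subset hab f.admissible_relations (List.cons_ne_nil _ _) hchain h4
      hsub
  · refine fun hE => langNE_leftPattern_subset f.admissible_relations fun L hL hchain => ?_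
    obtain ⟨n, L, rfl⟩ := List.exists_cons_of_ne_nil hL
    exact hE L.length (eq_iterate_of_isChain hN hchain).symm

end CollatzMap

section Program

open Function

/-- Programs for a machine with registers `0`, `1`, `2`, …; the program `loop r p` decrements `r`
and runs `p` as long as `r` is not `0`. -/
inductive Program : Type
  | skip : Program
  | inc (r : ℕ) : Program
  | seq (p q : Program) : Program
  | loop (r : ℕ) (p : Program) : Program

namespace Program

/-- Big-step semantics: started on the registers `ρ`, the program terminates with `ρ'`. -/
inductive Eval : Program → (ℕ → ℕ) → (ℕ → ℕ) → Prop
  | skip (ρ : ℕ → ℕ) : Eval skip ρ ρ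
  | inc (r : ℕ) (ρ : ℕ → ℕ) : Eval (inc r) ρ (update ρ r (ρ r + 1))
  | seq {p q : Program} {ρ₀ ρ₁ ρ₂ : ℕ → ℕ} : Eval p ρ₀ ρ₁ → Eval q ρ₁ ρ₂ → Eval (seq p q) ρ₀ ρ₂
  | loop_of_eq_zero {r : ℕ} {p : Program} {ρ : ℕ → ℕ} : ρ r = 0 → Eval (loop r p) ρ ρ
  | loop_of_ne_zero {r : ℕ} {p : Program} {ρ₀ ρ₁ ρ₂ : ℕ → ℕ} : ρ₀ r ≠ 0 →
      Eval p (update ρ₀ r (ρ₀ r - 1)) ρ₁ → Eval (loop r p) ρ₁ ρ₂ → Eval (loop r p) ρ₀ ρ₂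

theorem exists_eval_loop {r : ℕ} {p : Program} {I : ℕ → (ℕ → ℕ) → Prop}
    (hr : ∀ i ρ, I i ρ → ρ r = i)
    (hp : ∀ i ρ, I (i + 1) ρ → ∃ ρ', Eval p (update ρ r i) ρ' ∧ I i ρ') {n : ℕ} {ρ : ℕ → ℕ}
    (h : I n ρ) : ∃ ρ', Eval (loop r p) ρ ρ' ∧ I 0 ρ' := by
  induction n generalizing ρ with
  | zero => exact ⟨ρ, .loop_of_eq_zero (hr 0 ρ h), h⟩
  | succ n ih =>
    have hn : ρ r = n + 1 := hr _ ρ h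
    obtain ⟨ρ₁, hρ₁, h₁⟩ := hp n ρ h
    obtain ⟨ρ₂, hρ₂, h₂⟩ := ih h₁
    exact ⟨ρ₂, .loop_of_ne_zero (by lia) (by rwa [hn]) hρ₂, h₂⟩

/-- Sets the register `r` to `0`. -/
def clear (r : ℕ) : Program := loop r skip

theorem eval_clear (r : ℕ) (ρ : ℕ → ℕ) : Eval (clear r) ρ (update ρ r 0) := by
  obtain ⟨_, h, rfl⟩ := exists_eval_loop (r := r) (p := skip) (I := fun i ρ' => ρ' = update ρ r i)
    (by simp) (by rintro i _ rfl; exact ⟨_, .skip _, by simp⟩) (update_eq_self r ρ).symm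
  exact h

/-- Adds `s` to `d` and sets `s` to `0`. -/
def move (s d : ℕ) : Program := loop s (inc d)

theorem eval_move {s d : ℕ} (hsd : s ≠ d) (ρ : ℕ → ℕ) :
    Eval (move s d) ρ (update (update ρ d (ρ d + ρ s)) s 0) := by
  obtain ⟨_, h, i, hi, rfl⟩ := exists_eval_loop (r := s) (p := inc d)
    (I := fun i ρ' => ∃ j, j + i = ρ s ∧ ρ' = update (update ρ d (ρ d + j)) s i) (n := ρ s) (ρ := ρ)
    (by rintro i _ ⟨j, -, rfl⟩; simp) (by
      rintro i _ ⟨j, hj, rfl⟩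
      refine ⟨_, .inc _ _, j + 1, by lia, ?_⟩
      simp [hsd.symm, update_comm hsd.symm, Nat.add_assoc])
    ⟨0, zero_add _, by simp⟩
  rwa [← hi]

/-- Copies `s` to `d` by way of the register `t`. -/
def copy (s d t : ℕ) : Program :=
  seq (clear t) (seq (clear d) (seq (move s t) (loop t (seq (inc s) (inc d)))))

theorem eval_copy {s d t : ℕ} (hsd : s ≠ d) (hst : s ≠ t) (hdt : d ≠ t) (ρ : ℕ → ℕ) :
    Eval (copy s d t) ρ (update (update ρ t 0) d (ρ s)) := by
  obtain ⟨ρ', h, i, hi, rfl⟩ := exists_eval_loop (r := t) (p := seq (inc s) (inc d))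
    (I := fun i ρ' => ∃ j, j + i = ρ s ∧ ρ' = update (update (update ρ d j) s j) t i) (n := ρ s)
    (ρ := update (update (update ρ d 0) s 0) t (ρ s))
    (by rintro i _ ⟨j, -, rfl⟩; simp) (by
      rintro i _ ⟨j, hj, rfl⟩
      refine ⟨_, .seq (.inc _ _) (.inc _ _), j + 1, by lia, ?_⟩
      grind)
    ⟨0, zero_add _, rfl⟩
  have hmove := eval_move hst (update (update ρ t 0) d 0)
  have hρ : update (update (update (update ρ t 0) d 0) t (update (update ρ t 0) d 0 t +
      update (update ρ t 0) d 0 s)) s 0 = update (update (update ρ d 0) s 0) t (ρ s) := by grind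
  rw [hρ] at hmove
  have hρ' : update (update (update ρ d i) s i) t 0 = update (update ρ t 0) d (ρ s) := by
    grind
  exact .seq (eval_clear _ _) (.seq (eval_clear _ _) (.seq hmove (hρ' ▸ h)))

/-- The function `f` is computed by programs that take the arguments from any registers below
`base`, store the value in another register `out < base` and overwrite only the registers from
`base` on. -/
def Computes {n : ℕ} (f : List.Vector ℕ n → ℕ) : Prop :=
  ∀ (args : Fin n → ℕ) (out base : ℕ), (∀ i, args i < base) → out < base → (∀ i, args i ≠ out) →
    ∃ p, ∀ ρ, ∃ ρ', Eval p ρ ρ' ∧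
      ∀ r < base, ρ' r = update ρ out (f (List.Vector.ofFn fun i => ρ (args i))) r

theorem exists_eval_of_forall_computes {m n : ℕ} {g : Fin n → List.Vector ℕ m → ℕ}
    (hg : ∀ i, Computes (g i)) {args : Fin m → ℕ} {base : ℕ} (hargs : ∀ i, args i < base) :
    ∃ p, ∀ ρ, ∃ ρ', Eval p ρ ρ' ∧ (∀ r < base, ρ' r = ρ r) ∧
      ∀ i : Fin n, ρ' (base + i) = g i (List.Vector.ofFn fun j => ρ (args j)) := by
  induction n with
  | zero => exact ⟨skip, fun ρ => ⟨ρ, .skip ρ, fun _ _ => rfl, Fin.rec0⟩⟩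
  | succ n ih =>
    obtain ⟨p, hp⟩ := ih fun i => hg i.castSucc
    obtain ⟨q, hq⟩ := hg (Fin.last n) args (base + n) (base + n + 1)
      (fun i => (hargs i).trans (by lia)) (by lia) (fun i => ((hargs i).trans_le (by lia)).ne)
    refine ⟨seq p q, fun ρ => ?_⟩
    obtain ⟨ρ₁, hρ₁, hlow, hval⟩ := hp ρ
    obtain ⟨ρ₂, hρ₂, hout⟩ := hq ρ₁
    have hkeep : ∀ r < base + n, ρ₂ r = ρ₁ r := fun r hr => by
      rw [hout r (by lia), update_of_ne hr.ne]
    refine ⟨ρ₂, hρ₁.seq hρ₂, fun r hr => by rw [hkeep r (by lia), hlow r hr], ?_⟩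
    refine Fin.lastCases ?_ fun i => ?_
    · simp [hout, hlow _ (hargs _)]
    · rw [Fin.val_castSucc, hkeep _ (by lia), hval]

theorem Computes.comp {m n : ℕ} {f : List.Vector ℕ n → ℕ} {g : Fin n → List.Vector ℕ m → ℕ}
    (hf : Computes f) (hg : ∀ i, Computes (g i)) :
    Computes fun v => f (List.Vector.ofFn fun i => g i v) := by
  intro args out base hargs hout _
  obtain ⟨p, hp⟩ := exists_eval_of_forall_computes hg hargs
  obtain ⟨q, hq⟩ := hf (fun i => base + i) out (base + n) (by lia) (by lia) (by lia)
  refine ⟨seq p q, fun ρ => ?_⟩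
  obtain ⟨ρ₁, hρ₁, hlow, hval⟩ := hp ρ
  obtain ⟨ρ₂, hρ₂, hout⟩ := hq ρ₁
  refine ⟨ρ₂, hρ₁.seq hρ₂, fun r hr => ?_⟩
  rw [hout r (by lia), funext hval, update_apply, update_apply, hlow r hr]

theorem Computes.exists_eval_rec_step {n : ℕ} {g : List.Vector ℕ (n + 2) → ℕ} (hg : Computes g)
    {args : Fin n → ℕ} {base : ℕ} (hargs : ∀ i, args i < base) :
    ∃ p, ∀ ρ : ℕ → ℕ, ∃ ρ', Eval p ρ ρ' ∧ (∀ r ≤ base, ρ' r = ρ r) ∧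
      ρ' (base + 1) = ρ (base + 1) + 1 ∧ ρ' (base + 2) =
        g (ρ (base + 1) ::ᵥ ρ (base + 2) ::ᵥ List.Vector.ofFn fun i => ρ (args i)) := by
  let args' : Fin (n + 2) → ℕ := Fin.cons (base + 1) (Fin.cons (base + 2) args)
  have hargs' : ∀ i, args' i < base + 3 := by
    simp only [Fin.forall_fin_succ, args', Fin.cons_zero, Fin.cons_succ]
    exact ⟨by lia, by lia, fun i => (hargs i).trans (by lia)⟩
  obtain ⟨p, hp⟩ := hg args' (base + 3) (base + 4) (fun i => (hargs' i).trans (by lia)) (by lia)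
    fun i => (hargs' i).ne
  refine ⟨seq p (seq (copy (base + 3) (base + 2) (base + 4)) (inc (base + 1))), fun ρ => ?_⟩
  obtain ⟨ρ₁, hρ₁, h₁⟩ := hp ρ
  have hvec : (List.Vector.ofFn fun i => ρ (args' i)) =
      ρ (base + 1) ::ᵥ ρ (base + 2) ::ᵥ List.Vector.ofFn fun i => ρ (args i) := by
    simp [List.Vector.ofFn, args']
  have hcopy := eval_copy (s := base + 3) (d := base + 2) (t := base + 4) (by lia) (by lia) (by lia)
    ρ₁
  refine ⟨_, hρ₁.seq (hcopy.seq (.inc _ _)), fun r hr => ?_, ?_, ?_⟩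
  · grind
  · simp [h₁]
  · simp [h₁, hvec]

theorem Computes.exists_eval_rec {n : ℕ} {g : List.Vector ℕ (n + 2) → ℕ} (hg : Computes g)
    {args : Fin n → ℕ} {base : ℕ} (hargs : ∀ i, args i < base) :
    ∃ p, ∀ ρ : ℕ → ℕ, ρ (base + 1) = 0 → ∃ ρ', Eval p ρ ρ' ∧ (∀ r < base, ρ' r = ρ r) ∧
      ρ' (base + 2) = (ρ base).rec (ρ (base + 2)) fun y IH =>
        g (y ::ᵥ IH ::ᵥ List.Vector.ofFn fun i => ρ (args i)) := by
  obtain ⟨p, hp⟩ := hg.exists_eval_rec_step hargs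
  refine ⟨loop base p, fun ρ hρ => ?_⟩
  let value (y : ℕ) : ℕ := y.rec (ρ (base + 2)) fun y IH =>
    g (y ::ᵥ IH ::ᵥ List.Vector.ofFn fun i => ρ (args i))
  let I (i : ℕ) (ρ₁ : ℕ → ℕ) : Prop := ∃ y, y + i = ρ base ∧ ρ₁ base = i ∧ ρ₁ (base + 1) = y ∧
    ρ₁ (base + 2) = value y ∧ ∀ r < base, ρ₁ r = ρ r
  have hstep : ∀ i ρ₁, I (i + 1) ρ₁ → ∃ ρ₂, Eval p (update ρ₁ base i) ρ₂ ∧ I i ρ₂ := by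
    rintro i ρ₁ ⟨y, hy, -, hindex, hval, hlow⟩
    obtain ⟨ρ₂, hρ₂, hkeep, hindex₂, hval₂⟩ := hp (update ρ₁ base i)
    have hlow' : ∀ r < base, update ρ₁ base i r = ρ r := fun r hr => by
      rw [update_of_ne hr.ne, hlow r hr]
    refine ⟨ρ₂, hρ₂, y + 1, by lia, by simp [hkeep], by simp [hindex₂, hindex], ?_,
      fun r hr => by rw [hkeep r hr.le, hlow' r hr]⟩
    simp [hval₂, hindex, hval, hlow' _ (hargs _), value]
  obtain ⟨ρ', h, y, hy, -, -, hval, hlow⟩ := exists_eval_loop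
    (fun i ρ' (h : I i ρ') => h.choose_spec.2.1) hstep ⟨0, zero_add _, rfl, hρ, rfl, fun _ _ => rfl⟩
  exact ⟨ρ', h, hlow, hval.trans (congrArg value hy)⟩

theorem Computes.prec {n : ℕ} {f : List.Vector ℕ n → ℕ} {g : List.Vector ℕ (n + 2) → ℕ}
    (hf : Computes f) (hg : Computes g) : Computes fun v : List.Vector ℕ (n + 1) =>
      v.head.rec (f v.tail) fun y IH => g (y ::ᵥ IH ::ᵥ v.tail) := by
  intro args out base hargs hout _
  obtain ⟨p, hp⟩ := hf (fun i => args i.succ) (base + 2) (base + 3)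
    (fun i => (hargs _).trans (by lia)) (by lia) (fun i => ((hargs _).trans (by lia)).ne)
  obtain ⟨q, hq⟩ := hg.exists_eval_rec fun i => hargs i.succ
  have hargs₀ := hargs 0
  refine ⟨seq (copy (args 0) base (base + 1)) (seq p (seq q (copy (base + 2) out base))),
    fun ρ => ?_⟩
  have hcopy := eval_copy (s := args 0) (d := base) (t := base + 1) (by lia) (by lia) (by lia) ρ
  set ρ₁ := update (update ρ (base + 1) 0) base (ρ (args 0))
  obtain ⟨ρ₂, hρ₂, h₂⟩ := hp ρ₁
  obtain ⟨ρ₃, hρ₃, hlow, hval⟩ := hq ρ₂ (by simp [h₂, ρ₁])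
  have hcopy' := eval_copy (s := base + 2) (d := out) (t := base) (by lia) (by lia) (by lia) ρ₃
  refine ⟨_, hcopy.seq (hρ₂.seq (hρ₃.seq hcopy')), fun r hr => ?_⟩
  have hlow₁ : ∀ r < base, ρ₁ r = ρ r := fun r hr => by
    simp [ρ₁, hr.ne, (hr.trans (Nat.lt_succ_self base)).ne]
  have hlow₂ : ∀ r < base, ρ₂ r = ρ r := fun r hr => by
    rw [h₂ r (by lia), update_of_ne (by lia), hlow₁ r hr]
  have hbase : ρ₂ base = ρ (args 0) := by simp [h₂, ρ₁]
  have hacc : ρ₂ (base + 2) = f (List.Vector.ofFn fun i => ρ (args i.succ)) := by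
    simp [h₂, hlow₁ _ (hargs _)]
  simp only [update_apply, hval, hbase, hacc, hr.ne, if_false, hlow r hr, hlow₂ _ (hargs _),
    hlow₂ r hr]
  rfl

theorem computes_of_primrec {n : ℕ} {f : List.Vector ℕ n → ℕ} (h : Nat.Primrec' f) :
    Computes f := by
  induction h with
  | zero => exact fun _ out _ _ _ _ => ⟨clear out, fun ρ => ⟨_, eval_clear out ρ, fun _ _ => rfl⟩⟩
  | succ =>
    intro args out base hargs hout hne
    refine ⟨seq (copy (args 0) out base) (inc out), fun ρ => ⟨_, (eval_copy (hne 0) (hargs 0).ne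
      hout.ne ρ).seq (.inc _ _), fun r hr => ?_⟩⟩
    simp only [update_apply, hr.ne, if_false, if_true, List.Vector.head_ofFn]
    split_ifs <;> rfl
  | get i =>
    intro args out base hargs hout hne
    refine ⟨copy (args i) out base, fun ρ => ⟨_, eval_copy (hne i) (hargs i).ne hout.ne ρ,
      fun r hr => ?_⟩⟩
    simp [update_apply, hr.ne]
  | comp g _ _ hf hg => exact hf.comp hg
  | prec _ _ hf hg => exact hf.prec hg

theorem exists_eval_of_primrec₂ {F : ℕ → ℕ → ℕ} (hF : Primrec₂ F) :
    ∃ p, ∀ ρ : ℕ → ℕ, ∃ ρ', Eval p ρ ρ' ∧ ρ' 0 = ρ 0 ∧ ρ' 1 = ρ 1 + 1 ∧ ρ' 2 = F (ρ 0) (ρ 1) := by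
  obtain ⟨p, hp⟩ := computes_of_primrec (Nat.Primrec'.prim_iff₂.2 hF) ![0, 1] 2 3
    (by simp [Fin.forall_fin_two]) (by lia) (by simp [Fin.forall_fin_two])
  refine ⟨seq p (inc 1), fun ρ => ?_⟩
  obtain ⟨ρ', hρ', h⟩ := hp ρ
  refine ⟨_, hρ'.seq (.inc 1 ρ'), ?_, ?_, ?_⟩ <;> simp [h, List.Vector.ofFn]

/-- Sets all registers below `n` to `0`. -/
def clearBelow : ℕ → Program
  | 0 => skip
  | n + 1 => seq (clearBelow n) (clear n)

theorem exists_eval_clearBelow (n : ℕ) (ρ : ℕ → ℕ) :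
    ∃ ρ', Eval (clearBelow n) ρ ρ' ∧ ∀ r < n, ρ' r = 0 := by
  induction n with
  | zero => exact ⟨ρ, .skip ρ, by simp⟩
  | succ n ih =>
    obtain ⟨ρ', hρ', h⟩ := ih
    refine ⟨_, hρ'.seq (eval_clear n ρ'), fun r hr => ?_⟩
    rcases Nat.lt_succ_iff_lt_or_eq.1 hr with hr | rfl
    · rw [update_of_ne hr.ne, h r hr]
    · exact update_self ..

/-- A bound for the registers that occur in the program. -/
def width : Program → ℕ
  | skip => 0
  | inc r => r + 1
  | seq p q => max p.width q.width
  | loop r p => max (r + 1) p.width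

theorem width_clearBelow (n : ℕ) : (clearBelow n).width = n := by
  induction n with
  | zero => rfl
  | succ n ih => simp [clearBelow, clear, width, ih]

/-- Runs `p` until this stores `0` in the register `2`, and then clears all registers. -/
def search (p : Program) : Program :=
  seq (inc 2) (seq (loop 2 p) (clearBelow (max 3 p.width)))

theorem width_search (p : Program) : (search p).width = max 3 p.width := by
  simp [search, width, width_clearBelow]

variable {F : ℕ → ℕ → ℕ} {p : Program}

theorem exists_eval_loop_of_eq_zero
    (hp : ∀ ρ : ℕ → ℕ, ∃ ρ', Eval p ρ ρ' ∧ ρ' 0 = ρ 0 ∧ ρ' 1 = ρ 1 + 1 ∧ ρ' 2 = F (ρ 0) (ρ 1))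
    (n : ℕ) {ρ : ℕ → ℕ} (h : F (ρ 0) (ρ 1 + n) = 0) : ∃ ρ', Eval (loop 2 p) ρ ρ' := by
  induction n generalizing ρ with
  | zero =>
    by_cases h₂ : ρ 2 = 0
    · exact ⟨ρ, .loop_of_eq_zero h₂⟩
    · obtain ⟨ρ₁, hρ₁, -, -, hF⟩ := hp (update ρ 2 (ρ 2 - 1))
      exact ⟨ρ₁, .loop_of_ne_zero h₂ hρ₁ (.loop_of_eq_zero (hF.trans h))⟩
  | succ n ih =>
    by_cases h₂ : ρ 2 = 0
    · exact ⟨ρ, .loop_of_eq_zero h₂⟩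
    · obtain ⟨ρ₁, hρ₁, h₀, h₁, -⟩ := hp (update ρ 2 (ρ 2 - 1))
      obtain ⟨ρ₂, hρ₂⟩ := ih (ρ := ρ₁) (by
        rw [h₀, h₁, Nat.add_assoc, Nat.add_comm 1]; exact h)
      exact ⟨ρ₂, .loop_of_ne_zero h₂ hρ₁ hρ₂⟩

theorem exists_eval_search
    (hp : ∀ ρ : ℕ → ℕ, ∃ ρ', Eval p ρ ρ' ∧ ρ' 0 = ρ 0 ∧ ρ' 1 = ρ 1 + 1 ∧ ρ' 2 = F (ρ 0) (ρ 1))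
    {ρ : ℕ → ℕ} {t : ℕ} (h₁ : ρ 1 = 0) (h : F (ρ 0) t = 0) :
    ∃ ρ', Eval (search p) ρ ρ' ∧ ∀ r < (search p).width, ρ' r = 0 := by
  obtain ⟨ρ₁, hρ₁⟩ := exists_eval_loop_of_eq_zero hp t (ρ := update ρ 2 (ρ 2 + 1))
    (by simpa [h₁] using h)
  obtain ⟨ρ₂, hρ₂, hclear⟩ := exists_eval_clearBelow (max 3 p.width) ρ₁
  exact ⟨ρ₂, .seq (.inc 2 ρ) (hρ₁.seq hρ₂), by rwa [width_search]⟩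

end Program

end Program

section Machine

open Function

/-- Instructions of register machines; `decJump r t` jumps to the instruction with number `t` if the
register `r` is `0`, and decrements `r` otherwise. -/
inductive Instruction : Type
  | inc (r : ℕ) : Instruction
  | decJump (r t : ℕ) : Instruction
  | jump (t : ℕ) : Instruction

/-- All registers are smaller than `R` and all targets of jumps are at most `l`. -/
def Instruction.IsBounded (R l : ℕ) : Instruction → Prop
  | inc r => r < R
  | decJump r t => r < R ∧ t ≤ l
  | jump t => t ≤ l

/-- One step of the machine with the given instructions on a configuration, which consists of the
number of the next instruction and the contents of the registers. A configuration for which there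
is no next instruction is a fixed point. -/
def step (is : List Instruction) (x : ℕ × (ℕ → ℕ)) : ℕ × (ℕ → ℕ) :=
  match is[x.1]? with
  | some (.inc r) => (x.1 + 1, update x.2 r (x.2 r + 1))
  | some (.decJump r t) => if x.2 r = 0 then (t, x.2) else (x.1 + 1, update x.2 r (x.2 r - 1))
  | some (.jump t) => (t, x.2)
  | none => x

theorem step_of_getElem?_inc {is : List Instruction} {s r : ℕ} (h : is[s]? = some (.inc r))
    (ρ : ℕ → ℕ) : step is (s, ρ) = (s + 1, update ρ r (ρ r + 1)) := by
  simp [step, h]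

theorem step_of_getElem?_decJump_of_eq_zero {is : List Instruction} {s r t : ℕ}
    (h : is[s]? = some (.decJump r t)) {ρ : ℕ → ℕ} (hr : ρ r = 0) : step is (s, ρ) = (t, ρ) := by
  simp [step, h, hr]

theorem step_of_getElem?_decJump_of_ne_zero {is : List Instruction} {s r t : ℕ}
    (h : is[s]? = some (.decJump r t)) {ρ : ℕ → ℕ} (hr : ρ r ≠ 0) :
    step is (s, ρ) = (s + 1, update ρ r (ρ r - 1)) := by
  simp [step, h, hr]

theorem step_of_getElem?_jump {is : List Instruction} {s t : ℕ} (h : is[s]? = some (.jump t))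
    (ρ : ℕ → ℕ) : step is (s, ρ) = (t, ρ) := by
  simp [step, h]

theorem step_length (is : List Instruction) (ρ : ℕ → ℕ) :
    step is (is.length, ρ) = (is.length, ρ) := by
  simp [step]

/-- The machine can get from the configuration `x` to the configuration `y`. -/
def Reaches (is : List Instruction) (x y : ℕ × (ℕ → ℕ)) : Prop := ∃ n, (step is)^[n] x = y

theorem Reaches.trans {is : List Instruction} {x y z : ℕ × (ℕ → ℕ)} (hxy : Reaches is x y)
    (hyz : Reaches is y z) : Reaches is x z := by
  obtain ⟨m, rfl⟩ := hxy
  obtain ⟨n, rfl⟩ := hyz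
  exact ⟨n + m, iterate_add_apply ..⟩

namespace Program

/-- The number of instructions into which the program is translated. -/
def size : Program → ℕ
  | skip => 0
  | inc _ => 1
  | seq p q => p.size + q.size
  | loop _ p => p.size + 2

/-- The translation of a program whose first instruction has number `s`. -/
def instructions : Program → ℕ → List Instruction
  | skip, _ => []
  | inc r, _ => [.inc r]
  | seq p q, s => p.instructions s ++ q.instructions (s + p.size)
  | loop r p, s => .decJump r (s + p.size + 2) :: (p.instructions (s + 1) ++ [.jump s])

theorem length_instructions (p : Program) (s : ℕ) : (p.instructions s).length = p.size := by
  induction p generalizing s with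
  | skip => rfl
  | inc r => rfl
  | seq p q hp hq => simp [instructions, size, hp, hq]
  | loop r p hp => simp [instructions, size, hp]

theorem isBounded_of_mem_instructions {p : Program} {s R l : ℕ} {i : Instruction}
    (h : i ∈ p.instructions s) (hR : p.width ≤ R) (hl : s + p.size ≤ l) : i.IsBounded R l := by
  induction p generalizing s with
  | skip => simp [instructions] at h
  | inc r =>
    obtain rfl := List.mem_singleton.1 h
    exact hR
  | seq p q hp hq =>
    rw [width, max_le_iff] at hR
    rw [size] at hl
    rcases List.mem_append.1 h with h | h
    · exact hp h hR.1 (by lia)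
    · exact hq h hR.2 (by lia)
  | loop r p hp =>
    rw [width, max_le_iff] at hR
    rw [size] at hl
    simp only [instructions, List.mem_cons, List.mem_append, List.not_mem_nil, or_false] at h
    rcases h with rfl | h | rfl
    · exact ⟨hR.1, by lia⟩
    · exact hp h hR.2 (by lia)
    · exact (Nat.le_add_right _ _).trans hl

/-- The translation of the program occurs in the list `is` from number `s` on. -/
def OccursAt (is : List Instruction) : Program → ℕ → Prop
  | skip, _ => True
  | inc r, s => is[s]? = some (.inc r)
  | seq p q, s => p.OccursAt is s ∧ q.OccursAt is (s + p.size)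
  | loop r p, s => is[s]? = some (.decJump r (s + p.size + 2)) ∧ p.OccursAt is (s + 1) ∧
      is[s + p.size + 1]? = some (.jump s)

theorem occursAt_of_getElem?_eq {is : List Instruction} {p : Program} {s : ℕ}
    (h : ∀ i < p.size, is[s + i]? = (p.instructions s)[i]?) : p.OccursAt is s := by
  induction p generalizing s with
  | skip => trivial
  | inc r => exact h 0 one_pos
  | seq p q hp hq =>
    refine ⟨hp fun i hi => ?_, hq fun i hi => ?_⟩
    · rw [h i (hi.trans_le (Nat.le_add_right _ _)), instructions,
        List.getElem?_append_left (by rwa [length_instructions])]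
    · rw [Nat.add_assoc, h _ (Nat.add_lt_add_left hi _), instructions,
        List.getElem?_append_right (by simp [length_instructions]), length_instructions,
        Nat.add_sub_cancel_left]
  | loop r p hp =>
    refine ⟨h 0 (Nat.succ_pos _), hp fun i hi => ?_, ?_⟩
    · rw [Nat.add_assoc, Nat.add_comm 1, h _ (by simp only [size]; lia), instructions,
        List.getElem?_cons_succ, List.getElem?_append_left (by rwa [length_instructions])]
    · rw [Nat.add_assoc, h _ (by simp only [size]; lia), instructions,
        List.getElem?_cons_succ, ← length_instructions p (s + 1), List.getElem?_concat_length]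

theorem occursAt_instructions (p : Program) : p.OccursAt (p.instructions 0) 0 :=
  occursAt_of_getElem?_eq fun i _ => by rw [zero_add]

variable {is : List Instruction}

theorem OccursAt.exists_iterate_succ_step {r s : ℕ} {p : Program} {ρ ρ' : ℕ → ℕ}
    (h : (loop r p).OccursAt is s) (hr : ρ r ≠ 0)
    (hp : Reaches is (s + 1, update ρ r (ρ r - 1)) (s + 1 + p.size, ρ')) :
    ∃ n, (step is)^[n + 1] (s, ρ) = (s, ρ') := by
  obtain ⟨hdec, -, hjump⟩ := h
  obtain ⟨n, hn⟩ := hp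
  refine ⟨n + 1, ?_⟩
  rw [iterate_succ_apply, step_of_getElem?_decJump_of_ne_zero hdec hr, iterate_succ_apply', hn,
    Nat.add_right_comm, step_of_getElem?_jump hjump]

theorem Eval.reaches {p : Program} {ρ ρ' : ℕ → ℕ} (h : Eval p ρ ρ') {s : ℕ}
    (hs : p.OccursAt is s) : Reaches is (s, ρ) (s + p.size, ρ') := by
  induction h generalizing s with
  | skip => exact ⟨0, rfl⟩
  | inc r ρ => exact ⟨1, step_of_getElem?_inc hs ρ⟩
  | seq _ _ hp hq =>
    rw [size, ← Nat.add_assoc]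
    exact (hp hs.1).trans (hq hs.2)
  | loop_of_eq_zero hr => exact ⟨1, step_of_getElem?_decJump_of_eq_zero hs.1 hr⟩
  | loop_of_ne_zero hr _ _ hp hq =>
    obtain ⟨n, hn⟩ := hs.exists_iterate_succ_step hr (hp hs.2.1)
    exact Reaches.trans ⟨n + 1, hn⟩ (hq hs)

end Program

theorem iterate_ne_of_recurrent {α : Type*} {f : α → α} {S : Set α}
    (hS : ∀ x ∈ S, ∃ n, f^[n + 1] x ∈ S) {z : α} (hz : f z = z) (hzS : z ∉ S) {x : α} (hx : x ∈ S)
    (n : ℕ) : f^[n] x ≠ z := by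
  induction n using Nat.strong_induction_on generalizing x with
  | h n ih =>
    rintro rfl
    obtain ⟨m, hm⟩ := hS x hx
    rcases le_or_gt n (m + 1) with hn | hn
    · rw [← Nat.sub_add_cancel hn, iterate_add_apply, iterate_fixed hz] at hm
      exact hzS hm
    · refine ih (n - (m + 1)) (by lia) hm ?_
      rw [← iterate_add_apply, Nat.sub_add_cancel hn.le]

namespace Program

theorem exists_eq_zero_of_reaches_search {F : ℕ → ℕ → ℕ} {p : Program}
    (hp : ∀ ρ : ℕ → ℕ, ∃ ρ', Eval p ρ ρ' ∧ ρ' 0 = ρ 0 ∧ ρ' 1 = ρ 1 + 1 ∧ ρ' 2 = F (ρ 0) (ρ 1))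
    {ρ ρ' : ℕ → ℕ} (h : Reaches ((search p).instructions 0) (0, ρ) ((search p).size, ρ')) :
    ∃ t, F (ρ 0) t = 0 := by
  set is := (search p).instructions 0
  by_contra! hF
  have hocc : (search p).OccursAt is 0 := occursAt_instructions _
  have hloop : (loop 2 p).OccursAt is 1 := hocc.2.1
  let S : Set (ℕ × (ℕ → ℕ)) := {x | x.1 = 1 ∧ x.2 0 = ρ 0 ∧ x.2 2 ≠ 0}
  have hS : ∀ x ∈ S, ∃ n, (step is)^[n + 1] x ∈ S := by
    rintro ⟨_, ρ₁⟩ ⟨rfl, h₀, h₂⟩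
    obtain ⟨ρ₂, hρ₂, h₀', -, h₂'⟩ := hp (update ρ₁ 2 (ρ₁ 2 - 1))
    obtain ⟨m, hm⟩ := hloop.exists_iterate_succ_step h₂ (hρ₂.reaches hloop.2.1)
    refine ⟨m, hm ▸ ⟨rfl, h₀'.trans h₀, h₂'.trans_ne ?_⟩⟩
    rw [update_of_ne (by decide), show ρ₁ 0 = ρ 0 from h₀]
    exact hF _
  have hfix : step is ((search p).size, ρ') = ((search p).size, ρ') := by
    rw [← length_instructions (search p) 0]
    exact step_length is ρ'
  have hnotMem : ((search p).size, ρ') ∉ S := fun h => by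
    have := h.1
    simp only [search, size] at this
    lia
  have hmem : step is (0, ρ) ∈ S := by
    rw [step_of_getElem?_inc hocc.1]
    simp [S]
  obtain ⟨n, hn⟩ := h
  refine iterate_ne_of_recurrent hS hfix hnotMem hmem n ?_
  rw [← iterate_succ_apply, iterate_succ_apply', hn, hfix]

theorem exists_instructions {F : ℕ → ℕ → ℕ} (hF : Primrec₂ F) :
    ∃ (is : List Instruction) (R : ℕ), 0 < R ∧ (∀ i ∈ is, i.IsBounded R is.length) ∧
      ∀ ρ : ℕ → ℕ, ρ 1 = 0 →
        ((∃ t, F (ρ 0) t = 0) → ∃ ρ', Reaches is (0, ρ) (is.length, ρ') ∧ ∀ r < R, ρ' r = 0) ∧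
        ∀ ρ', Reaches is (0, ρ) (is.length, ρ') → ∃ t, F (ρ 0) t = 0 := by
  obtain ⟨p, hp⟩ := exists_eval_of_primrec₂ hF
  refine ⟨(search p).instructions 0, (search p).width, by simp [width_search], fun i hi =>
    isBounded_of_mem_instructions hi le_rfl (by simp [length_instructions]), fun ρ hρ => ?_⟩
  rw [length_instructions]
  refine ⟨?_, fun ρ' => exists_eq_zero_of_reaches_search hp⟩
  rintro ⟨t, ht⟩
  obtain ⟨ρ', hρ', hclear⟩ := exists_eval_search hp hρ ht
  exact ⟨ρ', by simpa using hρ'.reaches (occursAt_instructions _), hclear⟩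

end Program

end Machine

section Encoding

open Function

/-- The prime number whose exponent encodes the contents of the register `r`. -/
noncomputable def registerPrime (r : ℕ) : ℕ := Nat.nth Nat.Prime r

theorem prime_registerPrime (r : ℕ) : (registerPrime r).Prime := Nat.prime_nth_prime r

theorem registerPrime_dvd_registerPrime_iff {r s : ℕ} :
    registerPrime r ∣ registerPrime s ↔ r = s := by
  rw [Nat.prime_dvd_prime_iff_eq (prime_registerPrime r) (prime_registerPrime s)]
  exact (Nat.nth_injective Nat.infinite_setOfPred_prime).eq_iff

/-- The number that encodes the contents `ρ` of the first `R` registers. The factor `W` makes all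
these numbers large. -/
noncomputable def registerCode (R W : ℕ) (ρ : ℕ → ℕ) : ℕ :=
  W * ∏ r ∈ Finset.range R, registerPrime r ^ ρ r

section RegisterCode

variable {R r : ℕ} (W : ℕ) (ρ : ℕ → ℕ)

theorem le_registerCode : W ≤ registerCode R W ρ :=
  Nat.le_mul_of_pos_right _ (Finset.prod_pos fun r _ => pow_pos (prime_registerPrime r).pos _)

theorem registerCode_eq_of_eq_zero {ρ : ℕ → ℕ} (h : ∀ r < R, ρ r = 0) : registerCode R W ρ = W := by
  rw [registerCode, Finset.prod_eq_one fun r hr => by rw [h r (Finset.mem_range.1 hr), pow_zero],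
    mul_one]

theorem registerCode_update_add_one (hr : r < R) :
    registerCode R W (update ρ r (ρ r + 1)) = registerPrime r * registerCode R W ρ := by
  have hmem := Finset.mem_range.2 hr
  rw [registerCode, registerCode, ← Finset.mul_prod_erase _ _ hmem,
    ← Finset.mul_prod_erase _ (fun i => registerPrime i ^ ρ i) hmem, update_self, pow_succ,
    Finset.prod_congr rfl fun i hi => by rw [update_of_ne (Finset.ne_of_mem_erase hi)]]
  ring

variable {ρ}

theorem registerPrime_mul_registerCode_update_sub_one (hr : r < R) (hρ : ρ r ≠ 0) :
    registerPrime r * registerCode R W (update ρ r (ρ r - 1)) = registerCode R W ρ := by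
  rw [← registerCode_update_add_one W _ hr, update_self, update_idem, Nat.sub_one_add_one hρ,
    update_eq_self]

variable {W}

theorem registerPrime_dvd_registerCode_iff (hr : r < R) (hW : ¬ registerPrime r ∣ W) :
    registerPrime r ∣ registerCode R W ρ ↔ ρ r ≠ 0 := by
  refine ⟨fun h hρ => ?_, fun hρ => ?_⟩
  · obtain ⟨i, -, hi⟩ := ((prime_registerPrime r).prime.dvd_finsetProd_iff _).1
      (((prime_registerPrime r).dvd_mul.1 h).resolve_left hW)
    obtain rfl := registerPrime_dvd_registerPrime_iff.1 ((prime_registerPrime r).dvd_of_dvd_pow hi)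
    rw [hρ, pow_zero] at hi
    exact (prime_registerPrime r).not_dvd_one hi
  · exact ⟨_, (registerPrime_mul_registerCode_update_sub_one W hr hρ).symm⟩

end RegisterCode

/-- The effect of a machine step on the number of the next instruction and the code of the
registers. -/
noncomputable def arithmeticStep (is : List Instruction) (x : ℕ × ℕ) : ℕ × ℕ :=
  match is[x.1]? with
  | some (.inc r) => (x.1 + 1, registerPrime r * x.2)
  | some (.decJump r t) =>
    if registerPrime r ∣ x.2 then (x.1 + 1, x.2 / registerPrime r) else (t, x.2)
  | some (.jump t) => (t, x.2)
  | none => x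

/-- The factor by which `arithmeticStep` multiplies an increment `P` of the register code, provided
that `P` is a multiple of the primes of all registers. -/
noncomputable def arithmeticSlope (is : List Instruction) (P : ℕ) (x : ℕ × ℕ) : ℕ :=
  match is[x.1]? with
  | some (.inc r) => registerPrime r * P
  | some (.decJump r _) => if registerPrime r ∣ x.2 then P / registerPrime r else P
  | _ => P

variable {is : List Instruction} {R : ℕ}

theorem arithmeticStep_registerCode {W : ℕ} (his : ∀ i ∈ is, i.IsBounded R is.length)
    (hW : ∀ r < R, ¬ registerPrime r ∣ W) (x : ℕ × (ℕ → ℕ)) :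
    arithmeticStep is (x.1, registerCode R W x.2) =
      ((step is x).1, registerCode R W (step is x).2) := by
  obtain ⟨s, ρ⟩ := x
  rcases hi : is[s]? with _ | r | ⟨r, t⟩ | t
  · simp [arithmeticStep, step, hi]
  · have hr : r < R := his _ (List.mem_of_getElem? hi)
    simp [arithmeticStep, step, hi, registerCode_update_add_one W ρ hr]
  · have hr : r < R := (his _ (List.mem_of_getElem? hi)).1
    by_cases hρ : ρ r = 0
    · simp [arithmeticStep, step, hi, hρ, registerPrime_dvd_registerCode_iff hr (hW r hr)]
    · simp [arithmeticStep, step, hi, hρ,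
        ← registerPrime_mul_registerCode_update_sub_one W hr hρ, (prime_registerPrime r).pos]
  · simp [arithmeticStep, step, hi]

theorem arithmeticStep_mul_add {P : ℕ} (his : ∀ i ∈ is, i.IsBounded R is.length)
    (hP : ∀ r < R, registerPrime r ∣ P) (s q X : ℕ) :
    arithmeticStep is (s, P * q + X) = ((arithmeticStep is (s, X)).1,
      arithmeticSlope is P (s, X) * q + (arithmeticStep is (s, X)).2) := by
  rcases hi : is[s]? with _ | r | ⟨r, t⟩ | t
  · simp [arithmeticStep, arithmeticSlope, hi]
  · simp [arithmeticStep, arithmeticSlope, hi, mul_add, mul_assoc]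
  · obtain ⟨P, rfl⟩ := hP r (his _ (List.mem_of_getElem? hi)).1
    have hdvd : registerPrime r ∣ registerPrime r * (P * q) + X ↔ registerPrime r ∣ X :=
      Nat.dvd_add_right (dvd_mul_right _ _)
    have hpos := (prime_registerPrime r).pos
    by_cases hX : registerPrime r ∣ X
    · simp [arithmeticStep, arithmeticSlope, hi, hdvd, hX, mul_assoc, Nat.mul_add_div hpos, hpos]
    · simp [arithmeticStep, arithmeticSlope, hi, hdvd, hX, mul_assoc]
  · simp [arithmeticStep, arithmeticSlope, hi]

theorem arithmeticSlope_pos {P : ℕ} (his : ∀ i ∈ is, i.IsBounded R is.length)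
    (hP : ∀ r < R, registerPrime r ∣ P) (hP₀ : 0 < P) (x : ℕ × ℕ) :
    0 < arithmeticSlope is P x := by
  rw [arithmeticSlope]
  split
  · exact Nat.mul_pos (prime_registerPrime _).pos hP₀
  · next r t hi =>
    split_ifs
    · exact Nat.div_pos (Nat.le_of_dvd hP₀ (hP r (his _ (List.mem_of_getElem? hi)).1))
        (prime_registerPrime r).pos
    · exact hP₀
  · exact hP₀

theorem step_fst_le (his : ∀ i ∈ is, i.IsBounded R is.length) {x : ℕ × (ℕ → ℕ)}
    (hx : x.1 ≤ is.length) : (step is x).1 ≤ is.length := by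
  obtain ⟨s, ρ⟩ := x
  rcases hi : is[s]? with _ | r | ⟨r, t⟩ | t
  · simpa [step, hi] using hx
  all_goals
    have hbound := his _ (List.mem_of_getElem? hi)
    have hlt : s + 1 ≤ is.length := (List.getElem?_eq_some_iff.1 hi).1
  · simpa [step, hi] using hlt
  · simp only [step, hi]
    split_ifs
    exacts [hbound.2, hlt]
  · rw [step_of_getElem?_jump hi]
    exact hbound

theorem iterate_step_fst_le (his : ∀ i ∈ is, i.IsBounded R is.length) {x : ℕ × (ℕ → ℕ)}
    (hx : x.1 ≤ is.length) (n : ℕ) : ((step is)^[n] x).1 ≤ is.length := by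
  induction n with
  | zero => exact hx
  | succ n ih => rw [iterate_succ_apply']; exact step_fst_le his ih

/-- The simulation of the machine on numbers `(is.length + 1) * X + s`, where `s` is the number of
the next instruction and `X` is the code of the registers. -/
noncomputable def collatzMap (is : List Instruction) (R : ℕ)
    (his : ∀ i ∈ is, i.IsBounded R is.length) : CollatzMap where
  toFun n :=
    let y := arithmeticStep is (n % (is.length + 1), n / (is.length + 1))
    (is.length + 1) * y.2 + y.1
  modulus := (is.length + 1) * ∏ r ∈ Finset.range R, registerPrime r
  slope n := (is.length + 1) * arithmeticSlope is (∏ r ∈ Finset.range R, registerPrime r)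
    (n % (is.length + 1), n / (is.length + 1))
  modulus_pos := Nat.mul_pos is.length.succ_pos
    (Finset.prod_pos fun r _ => (prime_registerPrime r).pos)
  slope_pos n := Nat.mul_pos is.length.succ_pos <| arithmeticSlope_pos his
    (fun _ hr => Finset.dvd_prod_of_mem _ (Finset.mem_range.2 hr))
    (Finset.prod_pos fun r _ => (prime_registerPrime r).pos) _
  toFun_mul_add q n _ := by
    rw [mul_assoc, Nat.mul_add_mod, Nat.mul_add_div is.length.succ_pos, arithmeticStep_mul_add his
      (fun _ hr => Finset.dvd_prod_of_mem _ (Finset.mem_range.2 hr))]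
    ring

theorem registerPrime_dvd_modulus_collatzMap (his : ∀ i ∈ is, i.IsBounded R is.length) {r : ℕ}
    (hr : r < R) : registerPrime r ∣ (collatzMap is R his).modulus :=
  (Finset.dvd_prod_of_mem _ (Finset.mem_range.2 hr)).mul_left _

/-- The number that encodes a configuration of the machine. -/
noncomputable def configurationCode (is : List Instruction) (R W : ℕ) (x : ℕ × (ℕ → ℕ)) : ℕ :=
  (is.length + 1) * registerCode R W x.2 + x.1

theorem configurationCode_mod {x : ℕ × (ℕ → ℕ)} (W : ℕ) (hx : x.1 ≤ is.length) :
    configurationCode is R W x % (is.length + 1) = x.1 := by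
  rw [configurationCode, Nat.mul_add_mod, Nat.mod_eq_of_lt (Nat.lt_succ_of_le hx)]

theorem configurationCode_div {x : ℕ × (ℕ → ℕ)} (W : ℕ) (hx : x.1 ≤ is.length) :
    configurationCode is R W x / (is.length + 1) = registerCode R W x.2 := by
  rw [configurationCode, Nat.mul_add_div is.length.succ_pos,
    Nat.div_eq_of_lt (Nat.lt_succ_of_le hx), add_zero]

theorem le_configurationCode (W : ℕ) (x : ℕ × (ℕ → ℕ)) : W ≤ configurationCode is R W x :=
  ((le_registerCode W x.2).trans (Nat.le_mul_of_pos_left _ is.length.succ_pos)).trans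
    (Nat.le_add_right _ _)

theorem iterate_collatzMap_configurationCode {W : ℕ} (his : ∀ i ∈ is, i.IsBounded R is.length)
    (hW : ∀ r < R, ¬ registerPrime r ∣ W) {x : ℕ × (ℕ → ℕ)} (hx : x.1 ≤ is.length) (n : ℕ) :
    (collatzMap is R his)^[n] (configurationCode is R W x) =
      configurationCode is R W ((step is)^[n] x) := by
  induction n with
  | zero => rfl
  | succ n ih =>
    have hn := iterate_step_fst_le his hx n
    rw [iterate_succ_apply', iterate_succ_apply', ih]
    simp only [collatzMap, configurationCode_mod W hn, configurationCode_div W hn,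
      arithmeticStep_registerCode his hW]
    rfl

theorem exists_iterate_collatzMap_eq_iff {W : ℕ} (his : ∀ i ∈ is, i.IsBounded R is.length)
    (hW : ∀ r < R, ¬ registerPrime r ∣ W) {x : ℕ × (ℕ → ℕ)} (hx : x.1 ≤ is.length)
    (hhalt : ∀ ρ, Reaches is x (is.length, ρ) →
      ∃ ρ', Reaches is x (is.length, ρ') ∧ ∀ r < R, ρ' r = 0) :
    (∃ t, (collatzMap is R his)^[t + 2] (configurationCode is R W x) =
      (is.length + 1) * W + is.length) ↔ ∃ ρ, Reaches is x (is.length, ρ) := by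
  simp_rw [iterate_collatzMap_configurationCode his hW hx]
  constructor
  · rintro ⟨t, ht⟩
    have hmod := congrArg (· % (is.length + 1)) ht
    simp only [configurationCode_mod W (iterate_step_fst_le his hx _), Nat.mul_add_mod,
      Nat.mod_eq_of_lt is.length.lt_succ_self] at hmod
    exact ⟨((step is)^[t + 2] x).2, t + 2, Prod.ext hmod rfl⟩
  · rintro ⟨ρ, hρ⟩
    obtain ⟨ρ', ⟨t, ht⟩, hzero⟩ := hhalt ρ hρ
    refine ⟨t, ?_⟩
    rw [Nat.add_comm t, iterate_add_apply, ht, iterate_fixed (step_length is ρ'),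
      configurationCode, registerCode_eq_of_eq_zero W hzero]

theorem configurationCode_zero_update (is : List Instruction) (hR : 0 < R) (W k : ℕ) :
    configurationCode is R W (0, update 0 0 k) =
      (is.length + 1) * W * registerPrime 0 ^ k := by
  rw [configurationCode, registerCode, Finset.prod_eq_single_of_mem 0 (Finset.mem_range.2 hR)
    fun r _ hr => by simp [hr]]
  simp [mul_assoc]

theorem exists_collatzMap {F : ℕ → ℕ → ℕ} (hF : Primrec₂ F) :
    ∃ (f : CollatzMap) (E C p : ℕ), ∀ k, (∀ t, f.threshold ≤ f^[t] (C * p ^ k)) ∧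
      ((∃ t, f^[t + 2] (C * p ^ k) = E) ↔ ∃ t, F k t = 0) := by
  obtain ⟨is, R, hR, his, hF⟩ := Program.exists_instructions hF
  set f := collatzMap is R his with hf
  let W := f.threshold * f.modulus + 1
  have hW : ∀ r < R, ¬ registerPrime r ∣ W := fun r hr h =>
    (prime_registerPrime r).not_dvd_one <| (Nat.dvd_add_right
      ((registerPrime_dvd_modulus_collatzMap his hr).mul_left _)).1 h
  have hfW : f.threshold ≤ W :=
    (Nat.le_mul_of_pos_right _ f.modulus_pos).trans (Nat.le_succ _)
  refine ⟨f, (is.length + 1) * W + is.length, (is.length + 1) * W, registerPrime 0, fun k => ?_⟩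
  rw [← configurationCode_zero_update is hR]
  obtain ⟨hcomplete, hsound⟩ := hF (update 0 0 k) (by simp)
  rw [update_self] at hcomplete hsound
  constructor
  · intro t
    rw [hf, iterate_collatzMap_configurationCode his hW (Nat.zero_le _)]
    exact hfW.trans (le_configurationCode W _)
  · rw [exists_iterate_collatzMap_eq_iff his hW (Nat.zero_le _) fun ρ h => hcomplete (hsound ρ h)]
    exact ⟨fun ⟨ρ, h⟩ => hsound ρ h, fun h => (hcomplete h).imp fun _ => And.left⟩

end Encoding

section Reduction

open Nat.Partrec (Code)

/-- Is `0` if the program with number `k` halts on the input `0` within `t` steps. -/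
def haltingTest (k t : ℕ) : ℕ :=
  if (Code.evaln t (Denumerable.ofNat Code k) 0).isSome then 0 else 1

theorem primrec₂_haltingTest : Primrec₂ haltingTest := by
  have hevaln : Primrec fun p : ℕ × ℕ => Code.evaln p.2 (Denumerable.ofNat Code p.1) 0 :=
    Code.primrec_evaln.comp (Primrec.pair (Primrec.pair Primrec.snd
      ((Primrec.ofNat _).comp Primrec.fst)) (Primrec.const 0))
  exact Primrec.ite (Primrec.eq.comp (Primrec.option_isSome.comp hevaln) (Primrec.const true))
    (Primrec.const 0) (Primrec.const 1)

theorem exists_haltingTest_eq_zero_iff (c : Code) :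
    (∃ t, haltingTest (Encodable.encode c) t = 0) ↔ (Code.eval c 0).Dom := by
  simp only [haltingTest, Denumerable.ofNat_encode, ite_eq_left_iff, one_ne_zero, imp_false,
    not_not, Option.isSome_iff_exists, Part.dom_iff_mem, Code.evaln_complete, Option.mem_def]
  exact exists_comm

theorem primrec_const_mul_pow (C p : ℕ) : Primrec fun k => C * p ^ k := by
  refine (Primrec.nat_rec₁ C
    (Primrec.nat_mul.comp (Primrec.const p) Primrec.snd).to₂).of_eq fun k => ?_
  induction k with
  | zero => simp
  | succ k ih => simp only [ih, pow_succ]; ring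

theorem primrec_replicate {α : Type} [Primcodable α] (x : α) :
    Primrec fun n => List.replicate n x :=
  (Primrec.list_map Primrec.list_range (Primrec.const x).to₂).of_eq fun n => by
    simp [List.map_const']

theorem primrec_frame {α τ : Type} [Primcodable α] [Primcodable τ] (b : τ) (z m D : List τ)
    {G : α → List τ} (hG : Primrec G) : Primrec fun x => frame b z m (G x) D :=
  Primrec.list_append.comp (Primrec.const _) <| Primrec.list_cons.comp (Primrec.const _) <|
    Primrec.list_append.comp (Primrec.const _) <| Primrec.list_cons.comp (Primrec.const _) <|
      Primrec.list_append.comp hG (Primrec.const _)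

theorem primrec_historyWord {τ : Type} [Primcodable τ] (a b : τ) (E : ℕ) (x : List τ) :
    Primrec fun N => historyWord a b N E x :=
  Primrec.list_append.comp (Primrec.const _) <| Primrec.list_cons.comp (Primrec.const _) <|
    Primrec.list_append.comp (primrec_replicate a) (Primrec.const _)

theorem primrec_leftWord {α τ : Type} [Primcodable α] [Primcodable τ] (a b : τ) (n : ℕ)
    (D Y : List τ) {H : α → List τ} (hH : Primrec H) :
    Primrec fun x => leftWord a b n D (H x) Y :=
  Primrec.list_append.comp (Primrec.const _) <| Primrec.list_cons.comp (Primrec.const _) <|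
    Primrec.list_append.comp (Primrec.const _) <| Primrec.list_cons.comp (Primrec.const _) <|
      Primrec.list_append.comp (Primrec.const _) <|
        Primrec.list_append.comp (primrec_frame b _ _ Y hH) (Primrec.const _)

theorem primrec_leftPattern {σ : Type} [Fintype σ] [DecidableEq σ] [Primcodable σ] (a b : σ)
    (Rs : List AffineRelation) (E : ℕ) : Primrec fun N => leftPattern a b Rs N E :=
  primrec_leftWord _ _ _ _ _ (primrec_historyWord _ _ E _)

end Reduction

end PatternInclusion

open PatternInclusion in
theorem inclusion_NEPattern_undecidable_general (σ : Type) [Finite σ] [Nontrivial σ]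
    [Primcodable σ] : ∃ β : Pattern σ, ¬ ComputablePred fun α => LangNE α ⊆ LangNE β := by
  classical
  have := Fintype.ofFinite σ
  obtain ⟨a, b, hab⟩ := exists_pair_ne σ
  obtain ⟨f, E, C, p, hf⟩ := exists_collatzMap primrec₂_haltingTest
  refine ⟨rightPattern a b (errorPairs a b f.relations), fun hcomp => ?_⟩
  let α : Nat.Partrec.Code → Pattern σ := fun c =>
    leftPattern a b f.relations (C * p ^ Encodable.encode c) E
  have hα : Computable α :=
    ((primrec_leftPattern a b f.relations E).comp
      ((primrec_const_mul_pow C p).comp Primrec.encode)).to_comp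
  have hreduction : ∀ c, ¬ LangNE (α c) ⊆ LangNE (rightPattern a b (errorPairs a b f.relations)) ↔
      (Nat.Partrec.Code.eval c 0).Dom := by
    intro c
    obtain ⟨hthreshold, hhalt⟩ := hf (Encodable.encode c)
    rw [f.langNE_leftPattern_subset_iff hab hthreshold, not_forall_not, hhalt,
      exists_haltingTest_eq_zero_iff]
  exact ComputablePred.halting_problem 0
    ((ComputablePred.computable_of_manyOneReducible ⟨α, hα, fun _ => Iff.rfl⟩ hcomp).not.of_eq
      hreduction)

/-- The inclusion problem for non-erasing pattern languages is undecidable for every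
finite alphabet of size at least 2. -/
theorem inclusion_NEPattern_undecidable
    (σ : Type) [Fintype σ] [Primcodable σ] (hcard : 2 ≤ Fintype.card σ) :
    ¬ ComputablePred fun inp : Pattern σ × Pattern σ => LangNE inp.1 ⊆ LangNE inp.2 := by
  have := Fintype.one_lt_card_iff_nontrivial.1 hcard
  obtain ⟨β, hβ⟩ := inclusion_NEPattern_undecidable_general σ
  exact fun h => hβ (ComputablePred.computable_of_manyOneReducible
    ⟨fun α => (α, β), Computable.pair Computable.id (Computable.const β), fun _ => Iff.rfl⟩ h)
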